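/- Let Γ ⊂ PSL(3,ℂ) be a discrete group and let Ω ⊆ ℙ²_ℂ be either Eq(Γ), the Kulkarni discontinuity region Ω(Γ), or a maximal open set on which Γ acts properly discontinuously, with 4 ≤ LiG(Ω) < ∞. Let ℒ be a family of complex lines in general position contained in ℙ²_ℂ∖Ω with card(ℒ) = LiG(Ω). Then ℒ has exactly two vertices. -/

import Mathlib

/-!
Why a maximal family `L` has exactly two vertices.

*Limits.*  Rescale the matrices representing elements of `Γ` and pass to limits: `limCone` is the
closed cone of all matrices obtained this way, and `regSet` is the set of points killed by none of
its nonzero elements.  In each of the three cases the regular set of `Γ` is contained in `Ω`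
(`regSet_subset`), so every line of `Ωᶜ` consists of points killed by limit
matrices.  If `Γ` permutes a finite family of subsets, the finite-index subgroup preserving each
member of the family (`fixer`) has the same property (`regSet_fixer_subset`).

*Vertices.*  By maximality of `L`, every line of `Ωᶜ` passes through a double point of `L`.
Hence the vertices are the points lying on infinitely many lines of `Ωᶜ` (`pencilPts`); they form
a finite `Γ`-invariant set, and only finitely many lines of `Ωᶜ` avoid all of them.

*Counting.*  Suppose that the number of vertices is not two.  If there is no vertex, `Ωᶜ` contains
only finitely many lines, and a finite-index subgroup preserves three of them that are in general
position; if there is one vertex, finitely many lines avoid it, and at least two of these are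
available; if there are three or more, a finite-index subgroup fixes all of them.  So a
finite-index subgroup is simultaneously diagonal (`three_points_case`), or fixes a point and two
lines not through it (`two_lines_case`), or fixes a line pointwise (`collinear_case`).  In the last
two situations discreteness enters through `eq_one_of_contracted`: if conjugation by `g` shrinks
`c - 1` by a factor `α` with `|α| < 1`, the conjugates `gᵏ c g⁻ᵏ = 1 + αᵏ (c - 1)` tend to `1`,
hence `c = 1`.  This forces the subgroup to be simultaneously diagonalizable, or to have
eigenvalues of equal modulus.  In every case the singular points lie on at most three lines, which
is impossible because `Ωᶜ` contains at least four lines.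
-/

open scoped LinearAlgebra.Projectivization
open Projectivization Matrix Topology

noncomputable section

abbrev V3 : Type := Fin 3 → ℂ
abbrev SL3 := Matrix.SpecialLinearGroup (Fin 3) ℂ
abbrev PSL3 := SL3 ⧸ Subgroup.center SL3
abbrev P2 := ℙ ℂ V3

instance : TopologicalSpace P2 := instTopologicalSpaceQuotient

/-- The action of `SL(3,ℂ)` on `ℙ²_ℂ`. -/
def smulP2 (A : SL3) : P2 → P2 :=
  Projectivization.map ((Matrix.SpecialLinearGroup.toLin' A : V3 ≃ₗ[ℂ] V3) : V3 →ₗ[ℂ] V3)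
    (Matrix.SpecialLinearGroup.toLin' A).injective

lemma smulP2_mk (A : SL3) (v : V3) (hv : v ≠ 0) :
    smulP2 A (Projectivization.mk ℂ v hv) =
      Projectivization.mk ℂ (Matrix.SpecialLinearGroup.toLin' A v)
        ((Matrix.SpecialLinearGroup.toLin' A).map_ne_zero_iff.mpr hv) := rfl

lemma smulP2_one : smulP2 (1 : SL3) = id := by
  funext x
  induction x using Projectivization.ind with
  | h v hv => simp [smulP2_mk]

lemma smulP2_mul (A B : SL3) : smulP2 (A * B) = smulP2 A ∘ smulP2 B := by
  funext x
  induction x using Projectivization.ind with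
  | h v hv =>
    simp only [smulP2_mk, Function.comp_apply, _root_.map_mul]
    rfl

lemma continuous_smulP2 (A : SL3) : Continuous (smulP2 A) := by
  unfold smulP2 Projectivization.map
  exact Continuous.quotient_map'
    ((((Matrix.SpecialLinearGroup.toLin' A : V3 ≃ₗ[ℂ] V3) :
        V3 →ₗ[ℂ] V3).continuous_of_finiteDimensional.comp
      continuous_subtype_val).subtype_mk _) _
lemma smulP2_center (A : SL3) (hA : A ∈ Subgroup.center SL3) : smulP2 A = id := by
  obtain ⟨r, hr3, hrA⟩ := Matrix.SpecialLinearGroup.mem_center_iff.mp hA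
  have hr0 : r ≠ 0 := by
    intro h
    rw [h] at hr3
    simp at hr3
  funext x
  induction x using Projectivization.ind with
  | h v hv =>
    have hAv : Matrix.SpecialLinearGroup.toLin' A v = r • v := by
      rw [Matrix.SpecialLinearGroup.toLin'_apply]
      have : ((A : Matrix (Fin 3) (Fin 3) ℂ)) = Matrix.scalar (Fin 3) r := by
        rw [← hrA]
      rw [this]
      funext i
      simp [Matrix.toLin'_apply, Matrix.scalar, Matrix.mulVec_diagonal]
  
    simp only [smulP2_mk, id_eq]
    rw [Projectivization.mk_eq_mk_iff]
    exact ⟨Units.mk0 r hr0, by simp [hAv]⟩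

/-- The action of `SL(3,ℂ)` on `ℙ²` as a homomorphism into permutations. -/
def slPerm : SL3 →* Equiv.Perm P2 where
  toFun A :=
    { toFun := smulP2 A
      invFun := smulP2 A⁻¹
      left_inv := fun x => by
        have := (smulP2_mul A⁻¹ A).symm
        simp only [inv_mul_cancel, smulP2_one] at this
        exact congrFun this x
      right_inv := fun x => by
        have := (smulP2_mul A A⁻¹).symm
        simp only [mul_inv_cancel, smulP2_one] at this
        exact congrFun this x }
  map_one' := by
    ext x
    simp [smulP2_one]
  map_mul' A B := by
    ext x
    simp [smulP2_mul]

/-- The action of `PSL(3,ℂ)` on `ℙ²` as a homomorphism into permutations. -/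
def actHom : PSL3 →* Equiv.Perm P2 :=
  QuotientGroup.lift (Subgroup.center SL3) slPerm (by
    intro A hA
    ext x
    simpa [slPerm] using congrFun (smulP2_center A hA) x)

/-- The action of an element of `PSL(3,ℂ)` on `ℙ²`. -/
def pact (g : PSL3) : P2 → P2 := actHom g

instance : MulAction PSL3 P2 where
  smul g x := pact g x
  one_smul x := by
    show pact 1 x = x
    simp [pact]
  mul_smul g h x := by
    show pact (g * h) x = pact g (pact h x)
    simp [pact]

lemma pact_mk (A : SL3) : pact ((QuotientGroup.mk A : PSL3)) = smulP2 A := by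
  funext x
  simp [pact, actHom, slPerm]

lemma continuous_pact (g : PSL3) : Continuous (pact g) := by
  obtain ⟨A, rfl⟩ := QuotientGroup.mk_surjective g
  rw [pact_mk]
  exact continuous_smulP2 A

/-- The action of an element of `PSL(3,ℂ)` on `ℙ²`, as a continuous map. -/
def pactCM (g : PSL3) : C(P2, P2) := ⟨pact g, continuous_pact g⟩
instance : TopologicalSpace SL3 := instTopologicalSpaceSubtype

/-- A complex line in `ℙ²_ℂ`: the set of points whose representing vectors lie in
a fixed 2-dimensional complex linear subspace of `ℂ³`. -/
def IsLine (ℓ : Set P2) : Prop :=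
  ∃ W : Submodule ℂ V3, Module.finrank ℂ W = 2 ∧ ℓ = {p : P2 | p.submodule ≤ W}

/-- The set of complex lines contained in a given subset of `ℙ²_ℂ`. -/
def linesIn (S : Set P2) : Set (Set P2) := {ℓ | IsLine ℓ ∧ ℓ ⊆ S}

/-- A family of lines is in general position if no point lies on three
(pairwise distinct) lines of the family. -/
def InGenPos (L : Set (Set P2)) : Prop :=
  ∀ p : P2, ∀ ℓ₁ ∈ L, ∀ ℓ₂ ∈ L, ∀ ℓ₃ ∈ L,
    p ∈ ℓ₁ → p ∈ ℓ₂ → p ∈ ℓ₃ → ℓ₁ = ℓ₂ ∨ ℓ₁ = ℓ₃ ∨ ℓ₂ = ℓ₃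

/-- The families of complex lines in general position contained in the complement of `Ω`. -/
def genFamilies (Ω : Set P2) : Set (Set (Set P2)) :=
  {L | (∀ ℓ ∈ L, IsLine ℓ ∧ ℓ ⊆ Ωᶜ) ∧ InGenPos L}

/-- `Li Ω` : the number (in `ℕ∞`) of complex lines contained in the complement of `Ω`. -/
def Li (Ω : Set P2) : ℕ∞ := (linesIn Ωᶜ).encard

/-- `LiG Ω` : the maximal number (in `ℕ∞`) of complex lines in general position contained
in the complement of `Ω`. -/
def LiG (Ω : Set P2) : ℕ∞ := ⨆ L ∈ genFamilies Ω, L.encard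

/-- `Γ` acts properly discontinuously on the nonempty open invariant set `Ω`. -/
def ActsPropDiscOn (Γ : Subgroup PSL3) (Ω : Set P2) : Prop :=
  Ω.Nonempty ∧ IsOpen Ω ∧ (∀ γ ∈ Γ, pact γ '' Ω = Ω) ∧
    ∀ K : Set P2, K ⊆ Ω → IsCompact K →
      {γ : PSL3 | γ ∈ Γ ∧ ((pact γ '' K) ∩ K).Nonempty}.Finite

/-- `Ω` is a maximal open set on which `Γ` acts properly discontinuously. -/
def MaxDisc (Γ : Subgroup PSL3) (Ω : Set P2) : Prop :=
  ActsPropDiscOn Γ Ω ∧ ∀ Ω' : Set P2, ActsPropDiscOn Γ Ω' → Ω ⊆ Ω' → Ω' = Ω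

/-- `L0 Γ` : the closure of the set of points with infinite isotropy group. -/
def L0 (Γ : Subgroup PSL3) : Set P2 :=
  closure {z : P2 | {γ : PSL3 | γ ∈ Γ ∧ pact γ z = z}.Infinite}

/-- The cluster points of the orbit `Γ z`. -/
def orbitCluster (Γ : Subgroup PSL3) (z : P2) : Set P2 :=
  {w : P2 | ∀ U ∈ nhds w, {γ : PSL3 | γ ∈ Γ ∧ pact γ z ∈ U}.Infinite}

/-- The cluster points of `Γ K` for a set `K`. -/
def setCluster (Γ : Subgroup PSL3) (K : Set P2) : Set P2 :=
  {w : P2 | ∀ U ∈ nhds w, {γ : PSL3 | γ ∈ Γ ∧ ((pact γ '' K) ∩ U).Nonempty}.Infinite}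

/-- `L1 Γ` : the closure of the set of cluster points of orbits `Γ z`, `z ∉ L0 Γ`. -/
def L1 (Γ : Subgroup PSL3) : Set P2 :=
  closure (⋃ z ∈ (L0 Γ)ᶜ, orbitCluster Γ z)

/-- `L2 Γ` : the closure of the set of cluster points of `Γ K`,
`K` a compact subset of `ℙ²_ℂ ∖ (L0 Γ ∪ L1 Γ)`. -/
def L2 (Γ : Subgroup PSL3) : Set P2 :=
  closure (⋃ K ∈ {K : Set P2 | IsCompact K ∧ K ⊆ (L0 Γ ∪ L1 Γ)ᶜ}, setCluster Γ K)

/-- The Kulkarni limit set `Λ(Γ)`. -/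
def kulkarniLimit (Γ : Subgroup PSL3) : Set P2 := L0 Γ ∪ L1 Γ ∪ L2 Γ

/-- The Kulkarni discontinuity region `Ω(Γ)`. -/
def kulkarniRegion (Γ : Subgroup PSL3) : Set P2 := (kulkarniLimit Γ)ᶜ

/-- `C(Γ)` : the closure of the union of the Kulkarni limit sets of the cyclic
subgroups generated by the elements of `Γ`. -/
def CSet (Γ : Subgroup PSL3) : Set P2 :=
  closure (⋃ γ ∈ Γ, kulkarniLimit (Subgroup.zpowers γ))

/-- The equicontinuity set of `Γ` : points having a neighborhood `U` on which the
restrictions of the elements of `Γ` form a normal family, i.e. a relatively compact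
subset of `C(U, ℙ²_ℂ)` for the compact-open topology. -/
def eqSet (Γ : Subgroup PSL3) : Set P2 :=
  {z : P2 | ∃ U : Set P2, IsOpen U ∧ z ∈ U ∧
    IsCompact (closure {f : C(U, P2) | ∃ γ ∈ Γ, f = (pactCM γ).restrict U})}

/-- A vertex of a family `L` of lines lying in the complement of `Ω`. -/
def IsVertex (Ω : Set P2) (L : Set (Set P2)) (v : P2) : Prop :=
  ∃ ℓ₁ ∈ L, ∃ ℓ₂ ∈ L, ℓ₁ ≠ ℓ₂ ∧ ∃ C : Set (Set P2), C.Infinite ∧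
    (∀ ℓ ∈ C, IsLine ℓ ∧ ℓ ⊆ Ωᶜ) ∧ ℓ₁ ∩ ℓ₂ ∩ ⋂₀ C = {v}

open Classical

/-- Projection from the point `p` onto the line determined by `W` : `projPt p W x` is
the intersection point of the line through `p` and `x` with the line determined by `W`
(junk value if it is not unique). -/
def projPt (p : P2) (W : Submodule ℂ V3) (x : P2) : P2 :=
  if h : ∃ y : P2, y.submodule ≤ W ∧ y.submodule ≤ p.submodule ⊔ x.submodule
  then h.choose else x

open Filter

/-! ### Topology of the projective plane -/

/-- The space of `3 × 3` complex matrices, containing all limits of lifts of projective maps. -/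
abbrev Mat3 := Matrix (Fin 3) (Fin 3) ℂ

/-- Nonzero vectors of `ℂ³`. -/
abbrev V3nz := {v : V3 // v ≠ 0}

/-- The quotient map from nonzero vectors to the projective plane. -/
def proj (v : V3nz) : P2 := Projectivization.mk ℂ v.1 v.2

lemma proj_eq_iff (v w : V3nz) : proj v = proj w ↔ ∃ c : ℂ, c ≠ 0 ∧ w.1 = c • v.1 := by
  unfold proj
  rw [eq_comm, Projectivization.mk_eq_mk_iff]
  constructor
  · rintro ⟨a, ha⟩
    exact ⟨a, a.ne_zero, ha.symm⟩
  · rintro ⟨c, hc, h⟩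
    exact ⟨Units.mk0 c hc, h.symm⟩

lemma isOpenQuotientMap_proj : IsOpenQuotientMap proj := by
  have hq : IsQuotientMap proj := isQuotientMap_quot_mk
  refine ⟨hq.surjective, hq.continuous, ?_⟩
  intro U hU
  rw [← hq.isOpen_preimage]
  have : proj ⁻¹' (proj '' U) = ⋃ c : ℂˣ, (fun v : V3nz => (⟨(c : ℂ) • v.1,
      smul_ne_zero c.ne_zero v.2⟩ : V3nz)) ⁻¹' U := by
    ext v
    simp only [Set.mem_preimage, Set.mem_image, Set.mem_iUnion]
    constructor
    · rintro ⟨w, hw, h⟩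
      obtain ⟨c, hc, h⟩ := (proj_eq_iff v w).1 h.symm
      refine ⟨Units.mk0 c hc, ?_⟩
      convert hw
      exact h.symm
    · rintro ⟨c, hc⟩
      exact ⟨_, hc, ((proj_eq_iff _ _).2 ⟨c, c.ne_zero, rfl⟩).symm⟩
  rw [this]
  refine isOpen_iUnion fun c => hU.preimage ?_
  fun_prop

instance : T2Space P2 := by
  rw [t2Space_iff_of_isOpenQuotientMap isOpenQuotientMap_proj]
  have : {q : V3nz × V3nz | proj q.1 = proj q.2} =
      {q : V3nz × V3nz | ∀ i j, q.1.1 i * q.2.1 j = q.1.1 j * q.2.1 i} := by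
    ext ⟨v, w⟩
    simp only [Set.mem_ofPred_eq, proj_eq_iff]
    constructor
    · rintro ⟨c, -, h⟩ i j
      simp [h]
      ring
    · intro h
      obtain ⟨i, hi⟩ := Function.ne_iff.1 v.2
      simp only [Pi.zero_apply] at hi
      have key : w.1 = (w.1 i / v.1 i) • v.1 := by
        funext j
        simp only [Pi.smul_apply, smul_eq_mul]
        field_simp
        linear_combination h i j
      refine ⟨w.1 i / v.1 i, ?_, key⟩
      intro h0
      rw [h0, zero_smul] at key
      exact w.2 key
  rw [this]
  simp only [Set.ofPred_forall]
  refine isClosed_iInter fun i => isClosed_iInter fun j => isClosed_eq ?_ ?_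
  · exact ((continuous_apply i).comp (continuous_subtype_val.comp continuous_fst)).mul
      ((continuous_apply j).comp (continuous_subtype_val.comp continuous_snd))
  · exact ((continuous_apply j).comp (continuous_subtype_val.comp continuous_fst)).mul
      ((continuous_apply i).comp (continuous_subtype_val.comp continuous_snd))

instance : CompactSpace P2 := by
  have hs : IsCompact (Metric.sphere (0 : V3) 1) := isCompact_sphere _ _
  have hs' : CompactSpace (Metric.sphere (0 : V3) 1) := isCompact_iff_compactSpace.1 hs
  let f : Metric.sphere (0 : V3) 1 → V3nz := fun v => ⟨v.1, by
    have := v.2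
    intro h
    rw [h] at this
    simp at this⟩
  have hf : Continuous f := by fun_prop
  have hsurj : Function.Surjective (proj ∘ f) := by
    intro z
    obtain ⟨v, rfl⟩ := isOpenQuotientMap_proj.surjective z
    have hn : ‖v.1‖ ≠ 0 := norm_ne_zero_iff.2 v.2
    refine ⟨⟨((‖v.1‖ : ℂ)⁻¹) • v.1, ?_⟩, ?_⟩
    · simp [norm_smul, hn]
    · refine ((proj_eq_iff _ _).2 ⟨(‖v.1‖ : ℂ)⁻¹, ?_, rfl⟩).symm
      simpa using v.2
  rw [← isCompact_univ_iff, ← hsurj.range_eq]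
  exact isCompact_range (isOpenQuotientMap_proj.continuous.comp hf)

instance : FirstCountableTopology P2 := by
  refine ⟨fun z => ?_⟩
  obtain ⟨v, rfl⟩ := isOpenQuotientMap_proj.surjective z
  rw [← isOpenQuotientMap_proj.map_nhds_eq]
  infer_instance

lemma proj_rep (z : P2) : proj ⟨z.rep, z.rep_nonzero⟩ = z := z.mk_rep

lemma mulVec_rep_ne_zero_iff (M : Mat3) (v : V3nz) :
    M *ᵥ (proj v).rep ≠ 0 ↔ M *ᵥ v.1 ≠ 0 := by
  obtain ⟨c, hc, h⟩ := (proj_eq_iff v ⟨_, (proj v).rep_nonzero⟩).1 (proj_rep _).symm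
  simp only at h
  rw [h, Matrix.mulVec_smul]
  simp [hc]

/-- The partial action of a possibly singular matrix on the projective plane; outside its domain
(on the projectivized kernel) it is given the junk value `z`. -/
def mact (M : Mat3) (z : P2) : P2 :=
  if h : M *ᵥ z.rep ≠ 0 then proj ⟨M *ᵥ z.rep, h⟩ else z

lemma mact_proj (M : Mat3) (v : V3nz) (h : M *ᵥ v.1 ≠ 0) :
    mact M (proj v) = proj ⟨M *ᵥ v.1, h⟩ := by
  unfold mact
  rw [dif_pos ((mulVec_rep_ne_zero_iff M v).2 h)]
  obtain ⟨c, hc, h⟩ := (proj_eq_iff v ⟨_, (proj v).rep_nonzero⟩).1 (proj_rep _).symm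
  simp only at h
  refine ((proj_eq_iff _ _).2 ⟨c, hc, ?_⟩).symm
  simp only [h, Matrix.mulVec_smul]

lemma isOpenQuotientMap_prod : IsOpenQuotientMap (Prod.map (id : Mat3 → Mat3) proj) :=
  IsOpenQuotientMap.id.prodMap isOpenQuotientMap_proj

lemma isOpen_dom : IsOpen {q : Mat3 × P2 | q.1 *ᵥ q.2.rep ≠ 0} := by
  rw [← isOpenQuotientMap_prod.isQuotientMap.isOpen_preimage]
  have : Prod.map (id : Mat3 → Mat3) proj ⁻¹' {q : Mat3 × P2 | q.1 *ᵥ q.2.rep ≠ 0} =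
      {q : Mat3 × V3nz | q.1 *ᵥ q.2.1 ≠ 0} := by
    ext ⟨M, v⟩
    exact mulVec_rep_ne_zero_iff M v
  rw [this]
  refine isOpen_ne_fun ?_ continuous_const
  exact continuous_fst.matrix_mulVec (continuous_subtype_val.comp continuous_snd)

/-- The partial action is jointly continuous wherever it is defined. -/
lemma continuousAt_mact (M : Mat3) (z : P2) (h : M *ᵥ z.rep ≠ 0) :
    ContinuousAt (fun q : Mat3 × P2 => mact q.1 q.2) (M, z) := by
  obtain ⟨v, rfl⟩ := isOpenQuotientMap_proj.surjective z
  have e : ((M, proj v) : Mat3 × P2) = Prod.map (id : Mat3 → Mat3) proj (M, v) := rfl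
  rw [e, ← isOpenQuotientMap_prod.continuousAt_comp_iff]
  rw [mulVec_rep_ne_zero_iff] at h
  have hc : Continuous fun q : Mat3 × V3nz => q.1 *ᵥ q.2.1 :=
    continuous_fst.matrix_mulVec (continuous_subtype_val.comp continuous_snd)
  have hU : IsOpen {q : Mat3 × V3nz | q.1 *ᵥ q.2.1 ≠ 0} := isOpen_ne_fun hc continuous_const
  have hon : ContinuousOn ((fun q : Mat3 × P2 => mact q.1 q.2) ∘ Prod.map (id : Mat3 → Mat3) proj)
      {q : Mat3 × V3nz | q.1 *ᵥ q.2.1 ≠ 0} := by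
    rw [continuousOn_iff_continuous_domRestrict]
    have : (Set.domRestrict {q : Mat3 × V3nz | q.1 *ᵥ q.2.1 ≠ 0}
        ((fun q : Mat3 × P2 => mact q.1 q.2) ∘ Prod.map (id : Mat3 → Mat3) proj)) =
        fun q => proj ⟨q.1.1 *ᵥ q.1.2.1, q.2⟩ := by
      funext q
      exact mact_proj _ _ q.2
    rw [this]
    exact isOpenQuotientMap_proj.continuous.comp ((hc.comp continuous_subtype_val).subtype_mk _)
  exact hon.continuousAt (hU.mem_nhds h)

lemma mulVec_SL_ne_zero (A : SL3) {v : V3} (hv : v ≠ 0) : A.1 *ᵥ v ≠ 0 := by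
  intro h
  apply hv
  have h2 : (A⁻¹ * A).1 *ᵥ v = 0 := by
    rw [Matrix.SpecialLinearGroup.coe_mul, ← Matrix.mulVec_mulVec, h, Matrix.mulVec_zero]
  simpa using h2

lemma pact_eq_mact (A : SL3) (c : ℂ) (hc : c ≠ 0) (z : P2) :
    pact (QuotientGroup.mk A : PSL3) z = mact (c • A.1) z := by
  obtain ⟨v, rfl⟩ := isOpenQuotientMap_proj.surjective z
  have h0 : (c • A.1) *ᵥ v.1 ≠ 0 := by
    rw [Matrix.smul_mulVec]
    exact smul_ne_zero hc (mulVec_SL_ne_zero A v.2)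
  rw [mact_proj _ _ h0, pact_mk]
  unfold proj
  rw [smulP2_mk]
  have h1 : Matrix.SpecialLinearGroup.toLin' A v.1 ≠ 0 :=
    (Matrix.SpecialLinearGroup.toLin' A).map_ne_zero_iff.mpr v.2
  refine (proj_eq_iff ⟨_, h1⟩ ⟨_, h0⟩).2 ⟨c, hc, ?_⟩
  simp [Matrix.smul_mulVec, Matrix.SpecialLinearGroup.toLin'_apply]

lemma pact_proj (A : SL3) (v : V3nz) :
    pact (QuotientGroup.mk A : PSL3) (proj v) = proj ⟨A.1 *ᵥ v.1, mulVec_SL_ne_zero A v.2⟩ := by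
  rw [pact_eq_mact A 1 one_ne_zero]
  rw [mact_proj _ _ (by rw [one_smul]; exact mulVec_SL_ne_zero A v.2)]
  simp

lemma pact_one (z : P2) : pact 1 z = z := by simp [pact]
lemma pact_mul (g h : PSL3) (z : P2) : pact (g * h) z = pact g (pact h z) := by simp [pact]
lemma pact_inv_pact (g : PSL3) (z : P2) : pact g⁻¹ (pact g z) = z := by
  rw [← pact_mul, inv_mul_cancel, pact_one]
lemma pact_pact_inv (g : PSL3) (z : P2) : pact g (pact g⁻¹ z) = z := by
  rw [← pact_mul, mul_inv_cancel, pact_one]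
lemma pact_injective (g : PSL3) : Function.Injective (pact g) := fun x y h => by
  rw [← pact_inv_pact g x, h, pact_inv_pact]

lemma image_pact_eq_preimage (g : PSL3) (s : Set P2) : pact g '' s = pact g⁻¹ ⁻¹' s :=
  Set.image_eq_preimage_of_inverse (pact_inv_pact g) (pact_pact_inv g) |>.symm ▸ rfl

/-! ### Limits of rescaled group elements -/

instance : FirstCountableTopology Mat3 :=
  inferInstanceAs (FirstCountableTopology (Fin 3 → Fin 3 → ℂ))

/-- The maximum of the absolute values of the entries of a matrix. -/
def mnorm (M : Mat3) : ℝ := ‖(Matrix.of.symm M : Fin 3 → Fin 3 → ℂ)‖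

lemma mnorm_smul (c : ℂ) (M : Mat3) : mnorm (c • M) = ‖c‖ * mnorm M :=
  norm_smul c (Matrix.of.symm M : Fin 3 → Fin 3 → ℂ)

lemma mnorm_eq_zero {M : Mat3} : mnorm M = 0 ↔ M = 0 := by
  unfold mnorm
  rw [norm_eq_zero]
  exact Iff.rfl

lemma mnorm_nonneg (M : Mat3) : 0 ≤ mnorm M := norm_nonneg _

lemma isCompact_mnorm_le (R : ℝ) : IsCompact {M : Mat3 | mnorm M ≤ R} := by
  have h : IsCompact (Metric.closedBall (0 : Fin 3 → Fin 3 → ℂ) R) := isCompact_closedBall _ _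
  have h2 := h.image (f := fun M : Fin 3 → Fin 3 → ℂ => Matrix.of M) continuous_id
  convert h2 using 1
  ext M
  simp only [Set.mem_ofPred_eq, Set.mem_image, mem_closedBall_zero_iff]
  exact ⟨fun h => ⟨Matrix.of.symm M, h, rfl⟩, by rintro ⟨N, hN, rfl⟩; exact hN⟩

lemma isCompact_mnorm_one : IsCompact {M : Mat3 | mnorm M = 1} := by
  refine (isCompact_mnorm_le 1).of_isClosed_subset ?_ fun M hM => le_of_eq hM
  refine isClosed_eq ?_ continuous_const
  exact continuous_norm.comp (continuous_id : Continuous fun M : Fin 3 → Fin 3 → ℂ => M)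

/-- The preimage in `SL(3,ℂ)` of a subgroup of `PSL(3,ℂ)`. -/
def liftSL (Γ : Subgroup PSL3) : Subgroup SL3 := Γ.comap (QuotientGroup.mk' (Subgroup.center SL3))

lemma mem_liftSL {Γ : Subgroup PSL3} {A : SL3} :
    A ∈ liftSL Γ ↔ (QuotientGroup.mk A : PSL3) ∈ Γ := Iff.rfl

/-- The closure of the cone of complex multiples of elements of `G`. Its nonzero elements are the
lifts of elements of `G` and of the pseudo-projective limits of sequences in `G`. -/
def limCone (G : Subgroup SL3) : Set Mat3 := closure {M | ∃ c : ℂ, ∃ A ∈ G, M = c • A.1}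

/-- The points which are killed by no element of the closed cone of `G`. -/
def regSet (G : Subgroup SL3) : Set P2 := {z | ∀ τ ∈ limCone G, τ ≠ 0 → τ *ᵥ z.rep ≠ 0}

lemma smul_mem_limCone {G : Subgroup SL3} {τ : Mat3} (h : τ ∈ limCone G) (c : ℂ) :
    c • τ ∈ limCone G := by
  refine map_mem_closure (f := fun M : Mat3 => c • M) (continuous_const_smul c) h ?_
  rintro M ⟨d, A, hA, rfl⟩
  exact ⟨c * d, A, hA, smul_smul c d _⟩

lemma mul_mem_limCone {G : Subgroup SL3} {τ : Mat3} (h : τ ∈ limCone G) {B : SL3} (hB : B ∈ G) :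
    τ * B.1 ∈ limCone G := by
  refine map_mem_closure (f := fun M : Mat3 => M * B.1) (by fun_prop) h ?_
  rintro M ⟨d, A, hA, rfl⟩
  exact ⟨d, A * B, G.mul_mem hA hB, by simp⟩

lemma isCompact_limCone_sphere (G : Subgroup SL3) :
    IsCompact (limCone G ∩ {M : Mat3 | mnorm M = 1}) := by
  exact isCompact_mnorm_one.inter_left isClosed_closure

lemma mem_regSet_iff (G : Subgroup SL3) (z : P2) : z ∈ regSet G ↔
    ∀ τ ∈ limCone G ∩ {M : Mat3 | mnorm M = 1}, τ *ᵥ z.rep ≠ 0 := by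
  constructor
  · rintro h τ ⟨h1, h2⟩
    refine h τ h1 ?_
    rintro rfl
    exact one_ne_zero (h2.symm.trans (mnorm_eq_zero.2 rfl))
  · intro h τ hτ h0 hz
    have hn : mnorm τ ≠ 0 := fun h => h0 (mnorm_eq_zero.1 h)
    refine h ((mnorm τ : ℂ)⁻¹ • τ) ⟨smul_mem_limCone hτ _, ?_⟩ ?_
    · simp [mnorm_smul, hn, abs_of_nonneg (mnorm_nonneg τ)]
    · rw [Matrix.smul_mulVec, hz, smul_zero]

lemma isOpen_regSet (G : Subgroup SL3) : IsOpen (regSet G) := by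
  rw [isOpen_iff_mem_nhds]
  intro z hz
  rw [mem_regSet_iff] at hz
  have h := (isCompact_limCone_sphere G).eventually_forall_of_forall_eventually (x₀ := z)
    (P := fun z' τ => τ *ᵥ z'.rep ≠ 0) (fun τ hτ => by
      have : {q : P2 × Mat3 | q.2 *ᵥ q.1.rep ≠ 0} ∈ 𝓝 (z, τ) :=
        (isOpen_dom.preimage continuous_swap).mem_nhds (hz τ hτ)
      exact this)
  filter_upwards [h] with z' hz'
  exact (mem_regSet_iff G z').2 hz'

lemma pact_mem_regSet {Γ : Subgroup PSL3} {g : PSL3} (hg : g ∈ Γ) {z : P2}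
    (hz : z ∈ regSet (liftSL Γ)) : pact g z ∈ regSet (liftSL Γ) := by
  obtain ⟨B, rfl⟩ := QuotientGroup.mk_surjective g
  obtain ⟨v, rfl⟩ := isOpenQuotientMap_proj.surjective z
  intro τ hτ h0
  rw [pact_proj, mulVec_rep_ne_zero_iff]
  have h := hz (τ * B.1) (mul_mem_limCone hτ hg) (by
    intro h
    apply h0
    have h2 : τ * (B * B⁻¹).1 = 0 := by
      rw [Matrix.SpecialLinearGroup.coe_mul, ← mul_assoc, h, zero_mul]
    simpa using h2)
  rw [mulVec_rep_ne_zero_iff, ← Matrix.mulVec_mulVec] at h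
  exact h

lemma eventually_eq_one {Γ : Subgroup PSL3} (hΓ : DiscreteTopology ↥Γ) (B : ℕ → SL3)
    (hB : ∀ n, B n ∈ liftSL Γ) (hlim : Tendsto (fun n => (B n).1) atTop (𝓝 (1 : Mat3))) :
    ∀ᶠ n in atTop, (QuotientGroup.mk (B n) : PSL3) = 1 := by
  have h1 : Tendsto B atTop (𝓝 (1 : SL3)) := by
    exact (tendsto_subtype_rng (p := fun A : Mat3 => A.det = 1)).2 hlim
  have hc : Continuous (QuotientGroup.mk : SL3 → PSL3) := continuous_quot_mk
  have h2 : Tendsto (fun n => (⟨QuotientGroup.mk (B n), hB n⟩ : Γ)) atTop (𝓝 1) := by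
    rw [tendsto_subtype_rng]
    exact (hc.tendsto 1).comp h1
  rw [nhds_discrete, tendsto_pure] at h2
  filter_upwards [h2] with n hn
  exact congrArg Subtype.val hn

/-- In a discrete group, the lifts of distinct elements leave every bounded set of matrices. -/
lemma tendsto_norm_lift {Γ : Subgroup PSL3} (hΓ : DiscreteTopology ↥Γ) (A : ℕ → SL3)
    (hA : ∀ n, A n ∈ liftSL Γ)
    (hinj : Function.Injective fun n => (QuotientGroup.mk (A n) : PSL3)) :
    Tendsto (fun n => mnorm (A n).1) atTop atTop := by
  by_contra hcon
  rw [tendsto_atTop] at hcon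
  push Not at hcon
  obtain ⟨R, hR⟩ := hcon
  obtain ⟨φ, hφ, hφR⟩ := extraction_of_frequently_atTop hR
  have hmem : ∀ n, (A (φ n)).1 ∈ {M : Mat3 | mnorm M ≤ R} := fun n => (hφR n).le
  obtain ⟨M, -, ψ, hψ, hlim⟩ := (isCompact_mnorm_le R).tendsto_subseq hmem
  have hdet : M.det = 1 := by
    have h1 : Tendsto (fun n => ((A (φ (ψ n))).1).det) atTop (𝓝 M.det) :=
      ((Continuous.matrix_det continuous_id).tendsto M).comp hlim
    have h2 : (fun n => ((A (φ (ψ n))).1).det) = fun _ => 1 := by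
      funext n
      exact (A (φ (ψ n))).2
    rw [h2] at h1
    exact tendsto_nhds_unique h1 tendsto_const_nhds |>.symm ▸ rfl
  have hadj : Tendsto (fun n => ((A (φ (ψ n)))⁻¹).1) atTop (𝓝 M.adjugate) := by
    have : (fun n => ((A (φ (ψ n)))⁻¹).1) = fun n => ((A (φ (ψ n))).1).adjugate := by
      funext n
      exact Matrix.SpecialLinearGroup.coe_inv _
    rw [this]
    exact ((Continuous.matrix_adjugate continuous_id).tendsto M).comp hlim
  have hB : Tendsto (fun n => (A (φ (ψ (n + 1))) * (A (φ (ψ n)))⁻¹).1) atTop (𝓝 (1 : Mat3)) := by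
    have h1 := (hlim.comp (tendsto_add_atTop_nat 1)).mul hadj
    rw [Matrix.mul_adjugate, hdet, one_smul] at h1
    exact h1
  obtain ⟨n, hn⟩ := (eventually_eq_one hΓ _
    (fun n => (liftSL Γ).mul_mem (hA _) ((liftSL Γ).inv_mem (hA _))) hB).exists
  have h3 : (QuotientGroup.mk (A (φ (ψ (n + 1)))) : PSL3) = QuotientGroup.mk (A (φ (ψ n))) := by
    rw [QuotientGroup.mk_mul, QuotientGroup.mk_inv] at hn
    exact mul_inv_eq_one.1 hn
  have h4 := hψ.injective (hφ.injective (hinj h3))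
  omega

/-- A sequence of distinct elements of a discrete group subconverges, together with the inverses,
to pseudo-projective maps whose composition vanishes. -/
lemma exists_limits {Γ : Subgroup PSL3} (hΓ : DiscreteTopology ↥Γ) (γ : ℕ → PSL3)
    (hγ : ∀ n, γ n ∈ Γ) (hinj : Function.Injective γ) :
    ∃ φ : ℕ → ℕ, StrictMono φ ∧ ∃ M N : ℕ → Mat3, ∃ τ ∈ limCone (liftSL Γ),
      ∃ σ ∈ limCone (liftSL Γ), τ ≠ 0 ∧ σ ≠ 0 ∧ τ * σ = 0 ∧ Tendsto M atTop (𝓝 τ) ∧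
      Tendsto N atTop (𝓝 σ) ∧ (∀ n z, pact (γ (φ n)) z = mact (M n) z) ∧
      ∀ n z, pact (γ (φ n))⁻¹ z = mact (N n) z := by
  choose A hA using fun n => QuotientGroup.mk_surjective (γ n)
  have hAG : ∀ n, A n ∈ liftSL Γ := fun n => by rw [mem_liftSL, hA]; exact hγ n
  have hA0 : ∀ B : SL3, mnorm B.1 ≠ 0 := by
    intro B h
    have h2 : B.1 = 0 := mnorm_eq_zero.1 h
    have := B.2
    rw [h2] at this
    simp at this
  let c : SL3 → Mat3 := fun B => (mnorm B.1 : ℂ)⁻¹ • B.1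
  have hc : ∀ B ∈ liftSL Γ, c B ∈ limCone (liftSL Γ) ∩ {M : Mat3 | mnorm M = 1} := by
    intro B hB
    refine ⟨subset_closure ⟨_, B, hB, rfl⟩, ?_⟩
    simp [c, mnorm_smul, hA0, abs_of_nonneg (mnorm_nonneg B.1)]
  have hsph : ∀ τ ∈ limCone (liftSL Γ) ∩ {M : Mat3 | mnorm M = 1}, τ ≠ 0 := by
    rintro τ ⟨-, h2⟩ rfl
    exact one_ne_zero (h2.symm.trans (mnorm_eq_zero.2 rfl))
  have hK := isCompact_limCone_sphere (liftSL Γ)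
  obtain ⟨τ, hτ, φ₁, hφ₁, hlim₁⟩ := hK.tendsto_subseq (fun n => hc _ (hAG n))
  obtain ⟨σ, hσ, φ₂, hφ₂, hlim₂⟩ := hK.tendsto_subseq
    (fun n => hc _ ((liftSL Γ).inv_mem (hAG (φ₁ n))))
  have hlim₁' := hlim₁.comp hφ₂.tendsto_atTop
  refine ⟨φ₁ ∘ φ₂, hφ₁.comp hφ₂, fun n => c (A (φ₁ (φ₂ n))), fun n => c (A (φ₁ (φ₂ n)))⁻¹,
    τ, hτ.1, σ, hσ.1, hsph τ hτ, hsph σ hσ, ?_, hlim₁', hlim₂, ?_, ?_⟩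
  · have h1 := hlim₁'.mul hlim₂
    have h2 : Tendsto (fun n => mnorm (A (φ₁ (φ₂ n))).1) atTop atTop :=
      (tendsto_norm_lift hΓ A hAG (by simpa only [hA] using hinj)).comp
        (hφ₁.comp hφ₂).tendsto_atTop
    have h3 : Tendsto (fun n => mnorm ((A (φ₁ (φ₂ n)))⁻¹).1) atTop atTop :=
      (tendsto_norm_lift hΓ (fun n => (A n)⁻¹) (fun n => (liftSL Γ).inv_mem (hAG n)) (by
        simp only [QuotientGroup.mk_inv, hA]
        exact fun a b h => hinj (inv_injective h))).comp
        (hφ₁.comp hφ₂).tendsto_atTop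
    have h4 := (h2.inv_tendsto_atTop).mul (h3.inv_tendsto_atTop)
    have h5 : Tendsto (fun n => (((mnorm (A (φ₁ (φ₂ n))).1)⁻¹ * (mnorm ((A (φ₁ (φ₂ n)))⁻¹).1)⁻¹ : ℝ) : ℂ) •
        (1 : Mat3)) atTop (𝓝 ((0 : ℂ) • (1 : Mat3))) := by
      refine Tendsto.smul_const ?_ _
      have := (Complex.continuous_ofReal.tendsto _).comp h4
      rw [mul_zero, Complex.ofReal_zero] at this
      exact this
    rw [zero_smul] at h5
    refine tendsto_nhds_unique h1 (h5.congr fun n => ?_)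
    have h6 : (A (φ₁ (φ₂ n))).1 * ((A (φ₁ (φ₂ n)))⁻¹).1 = 1 := by
      rw [← Matrix.SpecialLinearGroup.coe_mul, mul_inv_cancel, Matrix.SpecialLinearGroup.coe_one]
    simp only [c, Function.comp, smul_mul_smul_comm, h6]
    push_cast
    rfl
  · intro n z
    have h := pact_eq_mact (A (φ₁ (φ₂ n))) (mnorm (A (φ₁ (φ₂ n))).1 : ℂ)⁻¹
      (by simpa using hA0 _) z
    rw [hA] at h
    exact h
  · intro n z
    have h := pact_eq_mact (A (φ₁ (φ₂ n)))⁻¹ (mnorm ((A (φ₁ (φ₂ n)))⁻¹).1 : ℂ)⁻¹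
      (inv_ne_zero (Complex.ofReal_ne_zero.2 (hA0 _))) z
    rw [QuotientGroup.mk_inv, hA] at h
    exact h

lemma tendsto_mact {M : ℕ → Mat3} {τ : Mat3} {x : ℕ → P2} {z : P2} (hM : Tendsto M atTop (𝓝 τ))
    (hx : Tendsto x atTop (𝓝 z)) (h : τ *ᵥ z.rep ≠ 0) :
    Tendsto (fun n => mact (M n) (x n)) atTop (𝓝 (mact τ z)) := by
  have := (continuousAt_mact τ z h).tendsto.comp (hM.prodMk_nhds hx)
  exact this

/-- If distinct `γₙ` carry points converging to `a` to points converging to a regular point `b`,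
then `a` is not regular, and is a limit of the points `γₙ⁻¹ b` along a subsequence. -/
lemma dynamics {Γ : Subgroup PSL3} (hΓ : DiscreteTopology ↥Γ) (γ : ℕ → PSL3)
    (hγ : ∀ n, γ n ∈ Γ) (hinj : Function.Injective γ) (x : ℕ → P2) {a b : P2}
    (hx : Tendsto x atTop (𝓝 a)) (hy : Tendsto (fun n => pact (γ n) (x n)) atTop (𝓝 b))
    (hb : b ∈ regSet (liftSL Γ)) :
    a ∉ regSet (liftSL Γ) ∧ ∃ φ : ℕ → ℕ, StrictMono φ ∧
      Tendsto (fun n => pact (γ (φ n))⁻¹ b) atTop (𝓝 a) := by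
  obtain ⟨φ, hφ, M, N, τ, hτ, σ, hσ, hτ0, hσ0, hmul, -, hN, -, hN'⟩ := exists_limits hΓ γ hγ hinj
  have hσb := hb σ hσ hσ0
  have h1 := tendsto_mact hN (hy.comp hφ.tendsto_atTop) hσb
  have h2 : a = mact σ b := by
    refine tendsto_nhds_unique (hx.comp hφ.tendsto_atTop) (h1.congr fun n => ?_)
    rw [← hN']
    exact pact_inv_pact _ _
  have h3 := tendsto_mact hN (tendsto_const_nhds (x := b)) hσb
  refine ⟨?_, φ, hφ, ?_⟩
  · intro ha
    have := ha τ hτ hτ0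
    obtain ⟨v, rfl⟩ := isOpenQuotientMap_proj.surjective b
    rw [mulVec_rep_ne_zero_iff] at hσb
    rw [h2, mact_proj _ _ hσb, mulVec_rep_ne_zero_iff, Matrix.mulVec_mulVec, hmul] at this
    simp at this
  · rw [h2]
    simpa only [hN'] using h3

/-- Elements of an infinite set of group elements can be listed injectively. -/
lemma exists_seq_of_infinite {s : Set PSL3} (hs : s.Infinite) :
    ∃ γ : ℕ → PSL3, Function.Injective γ ∧ ∀ n, γ n ∈ s := by
  refine ⟨fun n => (hs.natEmbedding s n).1, ?_, fun n => (hs.natEmbedding s n).2⟩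
  exact Subtype.val_injective.comp (hs.natEmbedding s).injective

lemma properlyDisc_regSet {Γ : Subgroup PSL3} (hΓ : DiscreteTopology ↥Γ) (K : Set P2)
    (hK : K ⊆ regSet (liftSL Γ)) (hc : IsCompact K) :
    {γ : PSL3 | γ ∈ Γ ∧ ((pact γ '' K) ∩ K).Nonempty}.Finite := by
  by_contra hinf
  obtain ⟨γ, hinj, hγ⟩ := exists_seq_of_infinite hinf
  have hx : ∀ n, ∃ x ∈ K, pact (γ n) x ∈ K := by
    intro n
    obtain ⟨-, y, ⟨x, hx, rfl⟩, hy⟩ := hγ n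
    exact ⟨x, hx, hy⟩
  choose x hxK hyK using hx
  obtain ⟨a, ha, φ, hφ, hlim⟩ := hc.tendsto_subseq hxK
  obtain ⟨b, hb, ψ, hψ, hlim'⟩ := hc.tendsto_subseq (fun n => hyK (φ n))
  exact (dynamics hΓ (fun n => γ (φ (ψ n))) (fun n => (hγ _).1)
    (hinj.comp (hφ.injective.comp hψ.injective)) (fun n => x (φ (ψ n)))
    (hlim.comp hψ.tendsto_atTop) hlim' (hK hb)).1 (hK ha)

/-! ### The regular set lies in every discontinuity region -/

lemma exists_inj_seq (s : ℕ → Set PSL3) (hs : ∀ n, (s n).Infinite) (hanti : Antitone s) :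
    ∃ γ : ℕ → PSL3, Function.Injective γ ∧ ∀ n, γ n ∈ s n := by
  obtain ⟨f, hf, hr⟩ := exists_seq_of_forall_finset_exists
    (fun p : ℕ × PSL3 => p.2 ∈ s p.1) (fun p q => p.1 < q.1 ∧ p.2 ≠ q.2) (by
      intro F _
      obtain ⟨g, hg, hgF⟩ := (hs (F.sup Prod.fst + 1)).exists_notMem_finset (F.image Prod.snd)
      refine ⟨(F.sup Prod.fst + 1, g), hg, fun x hx => ⟨?_, ?_⟩⟩
      · exact Nat.lt_succ_of_le (Finset.le_sup (f := Prod.fst) hx)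
      · rintro rfl
        exact hgF (Finset.mem_image_of_mem _ hx))
  have hmono : StrictMono fun n => (f n).1 := fun m n h => (hr m n h).1
  refine ⟨fun n => (f n).2, ?_, fun n => hanti (hmono.id_le n) (hf n)⟩
  intro m n h
  by_contra hne
  rcases lt_or_gt_of_ne hne with h' | h'
  · exact (hr _ _ h').2 h
  · exact (hr _ _ h').2 h.symm

/-- Under a properly discontinuous action on an open set `U`, no orbit (even of a point outside
`U`) accumulates at a point of `U`. -/
lemma notMem_orbitCluster {Γ : Subgroup PSL3} {U : Set P2} (hU : IsOpen U)
    (hpd : ∀ K : Set P2, K ⊆ U → IsCompact K →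
      {γ : PSL3 | γ ∈ Γ ∧ ((pact γ '' K) ∩ K).Nonempty}.Finite) {w : P2} (hw : w ∈ U) (y : P2) :
    w ∉ orbitCluster Γ y := by
  intro hcl
  obtain ⟨K, hK, hwK, hKU⟩ := exists_compact_subset hU hw
  have hinf := hcl K (mem_interior_iff_mem_nhds.1 hwK)
  obtain ⟨g, hg, hgK⟩ := hinf.nonempty
  refine (hinf.image (f := fun γ => γ * g⁻¹) (mul_left_injective g⁻¹).injOn) ?_
  refine (hpd K hKU hK).subset ?_
  rintro _ ⟨γ, ⟨hγ, hγK⟩, rfl⟩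
  refine ⟨Γ.mul_mem hγ (Γ.inv_mem hg), pact γ y, ⟨pact g y, hgK, ?_⟩, hγK⟩
  rw [pact_mul, pact_inv_pact]

lemma mem_orbitCluster_of_tendsto {Γ : Subgroup PSL3} (γ : ℕ → PSL3) (hγ : ∀ n, γ n ∈ Γ)
    (hinj : Function.Injective γ) {y w : P2}
    (h : Tendsto (fun n => pact (γ n) y) atTop (𝓝 w)) : w ∈ orbitCluster Γ y := by
  intro U hU
  obtain ⟨N, hN⟩ := eventually_atTop.1 (h hU)
  have h1 : (Set.Ici N).Infinite := Set.Ici_infinite N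
  refine (h1.image (f := γ) hinj.injOn).mono ?_
  rintro _ ⟨n, hn, rfl⟩
  exact ⟨hγ n, hN n hn⟩

lemma regSet_subset_kulkarniRegion {Γ : Subgroup PSL3} (hΓ : DiscreteTopology ↥Γ) :
    regSet (liftSL Γ) ⊆ kulkarniRegion Γ := by
  have hopen := isOpen_regSet (liftSL Γ)
  have h0 : Disjoint (regSet (liftSL Γ)) (L0 Γ) := by
    refine Disjoint.closure_right ?_ hopen
    rw [Set.disjoint_left]
    intro z hz hinf
    obtain ⟨γ, hinj, hγ⟩ := exists_seq_of_infinite hinf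
    refine (dynamics hΓ γ (fun n => (hγ n).1) hinj (fun _ => z) tendsto_const_nhds ?_ hz).1 hz
    simp only [(hγ _).2]
    exact tendsto_const_nhds
  have h1 : Disjoint (regSet (liftSL Γ)) (L1 Γ) := by
    refine Disjoint.closure_right ?_ hopen
    rw [Set.disjoint_left]
    intro w hw hcl
    simp only [Set.mem_iUnion] at hcl
    obtain ⟨z, -, hcl⟩ := hcl
    exact notMem_orbitCluster hopen (properlyDisc_regSet hΓ) hw z hcl
  have h2 : Disjoint (regSet (liftSL Γ)) (L2 Γ) := by
    refine Disjoint.closure_right ?_ hopen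
    rw [Set.disjoint_left]
    intro w hw hcl
    simp only [Set.mem_iUnion] at hcl
    obtain ⟨K, ⟨hK, hKL⟩, hcl⟩ := hcl
    obtain ⟨V, hV⟩ := (𝓝 w).exists_antitone_basis
    obtain ⟨γ, hinj, hγ⟩ := exists_inj_seq
      (fun n => {γ : PSL3 | γ ∈ Γ ∧ ((pact γ '' K) ∩ V n).Nonempty})
      (fun n => hcl _ (hV.mem n)) (by
        intro m n hmn γ hγ
        exact ⟨hγ.1, hγ.2.mono (Set.inter_subset_inter_right _ (hV.antitone hmn))⟩)
    have hx : ∀ n, ∃ x ∈ K, pact (γ n) x ∈ V n := by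
      intro n
      obtain ⟨-, y, ⟨x, hx, rfl⟩, hy⟩ := hγ n
      exact ⟨x, hx, hy⟩
    choose x hxK hxV using hx
    have hlimV : Tendsto (fun n => pact (γ n) (x n)) atTop (𝓝 w) := hV.tendsto hxV
    obtain ⟨k, hk, φ, hφ, hlim⟩ := hK.tendsto_subseq hxK
    obtain ⟨-, ψ, hψ, hψlim⟩ := dynamics hΓ (fun n => γ (φ n)) (fun n => (hγ _).1)
      (hinj.comp hφ.injective) (fun n => x (φ n)) hlim (hlimV.comp hφ.tendsto_atTop) hw
    refine hKL hk (Or.inr (subset_closure ?_))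
    simp only [Set.mem_iUnion]
    refine ⟨w, fun h => Set.disjoint_left.1 h0 hw h, ?_⟩
    refine mem_orbitCluster_of_tendsto (fun n => (γ (φ (ψ n)))⁻¹)
      (fun n => Γ.inv_mem (hγ _).1) ?_ hψlim
    exact inv_injective.comp (hinj.comp (hφ.injective.comp hψ.injective))
  intro z hz hl
  rcases hl with (hl | hl) | hl
  · exact Set.disjoint_left.1 h0 hz hl
  · exact Set.disjoint_left.1 h1 hz hl
  · exact Set.disjoint_left.1 h2 hz hl

lemma image_pact_eq_of_subset {Γ : Subgroup PSL3} {U : Set P2}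
    (h : ∀ γ ∈ Γ, ∀ z ∈ U, pact γ z ∈ U) : ∀ γ ∈ Γ, pact γ '' U = U := by
  intro γ hγ
  apply Set.Subset.antisymm
  · rintro _ ⟨z, hz, rfl⟩
    exact h γ hγ z hz
  · intro z hz
    exact ⟨pact γ⁻¹ z, h _ (Γ.inv_mem hγ) z hz, pact_pact_inv _ _⟩

/-- Adding the regular set to a domain of proper discontinuity gives another such domain. -/
lemma actsPropDiscOn_union {Γ : Subgroup PSL3} (hΓ : DiscreteTopology ↥Γ) {Ω : Set P2}
    (h : ActsPropDiscOn Γ Ω) : ActsPropDiscOn Γ (Ω ∪ regSet (liftSL Γ)) := by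
  obtain ⟨hne, hopen, hinv, hpd⟩ := h
  refine ⟨hne.mono Set.subset_union_left, hopen.union (isOpen_regSet _), ?_, ?_⟩
  · refine image_pact_eq_of_subset fun γ hγ z hz => ?_
    rcases hz with hz | hz
    · exact Or.inl (hinv γ hγ ▸ Set.mem_image_of_mem _ hz)
    · exact Or.inr (pact_mem_regSet hγ hz)
  · intro K hKU hK
    by_contra hinf
    obtain ⟨γ, hinj, hγ⟩ := exists_seq_of_infinite hinf
    have hx : ∀ n, ∃ x ∈ K, pact (γ n) x ∈ K := by
      intro n
      obtain ⟨-, y, ⟨x, hx, rfl⟩, hy⟩ := hγ n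
      exact ⟨x, hx, hy⟩
    choose x hxK hyK using hx
    obtain ⟨a, ha, φ, hφ, hlim⟩ := hK.tendsto_subseq hxK
    obtain ⟨b, hb, ψ, hψ, hlimb⟩ := hK.tendsto_subseq (fun n => hyK (φ n))
    -- the distinct maps `δ n` carry `u n → a` to points converging to `b`
    set δ : ℕ → PSL3 := fun n => γ (φ (ψ n)) with hδ
    set u : ℕ → P2 := fun n => x (φ (ψ n)) with hu
    have hδΓ : ∀ n, δ n ∈ Γ := fun n => (hγ _).1
    have hδinj : Function.Injective δ := hinj.comp (hφ.injective.comp hψ.injective)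
    have hua : Tendsto u atTop (𝓝 a) := hlim.comp hψ.tendsto_atTop
    have hub : Tendsto (fun n => pact (δ n) (u n)) atTop (𝓝 b) := hlimb
    -- a regular limit on one side forces the limit on the other side into `Ω`
    have key : ∀ (δ : ℕ → PSL3) (u : ℕ → P2) (a b : P2), (∀ n, δ n ∈ Γ) → Function.Injective δ →
        Tendsto u atTop (𝓝 a) → Tendsto (fun n => pact (δ n) (u n)) atTop (𝓝 b) → a ∈ K →
        b ∈ regSet (liftSL Γ) → False := by
      intro δ u a b hδΓ hδinj hua hub ha hb
      obtain ⟨h1, χ, hχ, hlimχ⟩ := dynamics hΓ δ hδΓ hδinj u hua hub hb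
      have haΩ : a ∈ Ω := (hKU ha).resolve_right h1
      refine notMem_orbitCluster hopen hpd haΩ b
        (mem_orbitCluster_of_tendsto (fun n => (δ (χ n))⁻¹) (fun n => Γ.inv_mem (hδΓ _)) ?_ hlimχ)
      exact inv_injective.comp (hδinj.comp hχ.injective)
    rcases hKU hb with hbΩ | hbE
    · rcases hKU ha with haΩ | haE
      · obtain ⟨Ka, hKa, haKa, hKaΩ⟩ := exists_compact_subset hopen haΩ
        obtain ⟨Kb, hKb, hbKb, hKbΩ⟩ := exists_compact_subset hopen hbΩ
        have hev := (hua.eventually_mem (mem_interior_iff_mem_nhds.1 haKa)).and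
          (hub.eventually_mem (mem_interior_iff_mem_nhds.1 hbKb))
        obtain ⟨N, hN⟩ := eventually_atTop.1 hev
        refine ((Set.Ici_infinite N).image (f := δ) hδinj.injOn)
          ((hpd (Ka ∪ Kb) (Set.union_subset hKaΩ hKbΩ) (hKa.union hKb)).subset ?_)
        rintro _ ⟨n, hn, rfl⟩
        exact ⟨hδΓ n, _, ⟨u n, Or.inl (hN n hn).1, rfl⟩, Or.inr (hN n hn).2⟩
      · refine key (fun n => (δ n)⁻¹) (fun n => pact (δ n) (u n)) b a
          (fun n => Γ.inv_mem (hδΓ n)) (inv_injective.comp hδinj) hub ?_ hb haE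
        simpa only [pact_inv_pact] using hua
    · exact key δ u a b hδΓ hδinj hua hub ha hbE

lemma regSet_subset_eqSet (Γ : Subgroup PSL3) : regSet (liftSL Γ) ⊆ eqSet Γ := by
  intro z hz
  refine ⟨regSet (liftSL Γ), isOpen_regSet _, hz, ?_⟩
  -- the normalized cone acts on the regular set; this is a continuous image of a compact space
  let T : Set Mat3 := limCone (liftSL Γ) ∩ {M : Mat3 | mnorm M = 1}
  have hT : CompactSpace T := isCompact_iff_compactSpace.1 (isCompact_limCone_sphere _)
  have hcont : Continuous fun q : T × regSet (liftSL Γ) => mact q.1.1 q.2.1 := by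
    rw [continuous_iff_continuousAt]
    rintro ⟨τ, w⟩
    have h1 := continuousAt_mact τ.1 w.1 ((mem_regSet_iff _ _).1 w.2 τ.1 τ.2)
    exact ContinuousAt.comp (f := fun q : T × regSet (liftSL Γ) => (q.1.1, q.2.1))
      (g := fun q : Mat3 × P2 => mact q.1 q.2) h1 (by fun_prop)
  let F : C(T, C(regSet (liftSL Γ), P2)) := ContinuousMap.curry ⟨_, hcont⟩
  have hF : IsCompact (Set.range F) := isCompact_range F.continuous
  refine hF.of_isClosed_subset isClosed_closure (closure_minimal ?_ hF.isClosed)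
  rintro f ⟨γ, hγ, rfl⟩
  obtain ⟨A, rfl⟩ := QuotientGroup.mk_surjective γ
  have hA0 : mnorm A.1 ≠ 0 := by
    intro h
    have h2 : A.1 = 0 := mnorm_eq_zero.1 h
    have := A.2
    rw [h2] at this
    simp at this
  refine ⟨⟨(mnorm A.1 : ℂ)⁻¹ • A.1, subset_closure ⟨_, A, hγ, rfl⟩, ?_⟩, ?_⟩
  · simp [mnorm_smul, hA0, abs_of_nonneg (mnorm_nonneg A.1)]
  · ext w
    exact (pact_eq_mact A _ (inv_ne_zero (Complex.ofReal_ne_zero.2 hA0)) w.1).symm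

lemma regSet_subset {Γ : Subgroup PSL3} (hΓ : DiscreteTopology ↥Γ) {Ω : Set P2}
    (hΩ : Ω = eqSet Γ ∨ Ω = kulkarniRegion Γ ∨ MaxDisc Γ Ω) : regSet (liftSL Γ) ⊆ Ω := by
  rcases hΩ with rfl | rfl | h
  · exact regSet_subset_eqSet Γ
  · exact regSet_subset_kulkarniRegion hΓ
  · have := h.2 _ (actsPropDiscOn_union hΓ h.1) Set.subset_union_left
    exact Set.union_eq_left.1 this

/-! ### Invariance of the discontinuity regions -/

lemma pact_mem_closure {s : Set P2} {γ : PSL3} (h : ∀ z ∈ s, pact γ z ∈ s) {z : P2}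
    (hz : z ∈ closure s) : pact γ z ∈ closure s :=
  map_mem_closure (continuous_pact γ) hz h

lemma pact_mem_setCluster {Γ : Subgroup PSL3} {γ : PSL3} (hγ : γ ∈ Γ) {K : Set P2} {w : P2}
    (hw : w ∈ setCluster Γ K) : pact γ w ∈ setCluster Γ K := by
  intro U hU
  have hinf := hw _ ((continuous_pact γ).continuousAt.preimage_mem_nhds hU)
  refine (hinf.image (f := fun δ => γ * δ) (mul_right_injective γ).injOn).mono ?_
  rintro _ ⟨δ, ⟨hδ, _, ⟨x, hx, rfl⟩, hxU⟩, rfl⟩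
  exact ⟨Γ.mul_mem hγ hδ, pact γ (pact δ x), ⟨x, hx, pact_mul _ _ _⟩, hxU⟩

lemma pact_mem_orbitCluster {Γ : Subgroup PSL3} {γ : PSL3} (hγ : γ ∈ Γ) {z w : P2}
    (hw : w ∈ orbitCluster Γ z) : pact γ w ∈ orbitCluster Γ z := by
  intro U hU
  have hinf := hw _ ((continuous_pact γ).continuousAt.preimage_mem_nhds hU)
  refine (hinf.image (f := fun δ => γ * δ) (mul_right_injective γ).injOn).mono ?_
  rintro _ ⟨δ, ⟨hδ, hxU⟩, rfl⟩
  refine ⟨Γ.mul_mem hγ hδ, ?_⟩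
  rw [pact_mul]
  exact hxU

lemma pact_mem_kulkarniLimit {Γ : Subgroup PSL3} {γ : PSL3} (hγ : γ ∈ Γ) {z : P2}
    (hz : z ∈ kulkarniLimit Γ) : pact γ z ∈ kulkarniLimit Γ := by
  rcases hz with (hz | hz) | hz
  · refine Or.inl (Or.inl (pact_mem_closure ?_ hz))
    intro z hz
    have hz' : {δ : PSL3 | δ ∈ Γ ∧ pact δ z = z}.Infinite := hz
    refine (hz'.image (f := fun δ => γ * δ * γ⁻¹) ?_).mono ?_
    · intro a _ b _ h
      simpa using h
    · rintro _ ⟨δ, ⟨hδ, hδz⟩, rfl⟩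
      refine ⟨Γ.mul_mem (Γ.mul_mem hγ hδ) (Γ.inv_mem hγ), ?_⟩
      rw [pact_mul, pact_inv_pact, pact_mul, hδz]
  · refine Or.inl (Or.inr (pact_mem_closure ?_ hz))
    intro w hw
    simp only [Set.mem_iUnion] at hw ⊢
    obtain ⟨y, hy, hw⟩ := hw
    exact ⟨y, hy, pact_mem_orbitCluster hγ hw⟩
  · refine Or.inr (pact_mem_closure ?_ hz)
    intro w hw
    simp only [Set.mem_iUnion] at hw ⊢
    obtain ⟨y, hy, hw⟩ := hw
    exact ⟨y, hy, pact_mem_setCluster hγ hw⟩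

lemma pact_mem_eqSet {Γ : Subgroup PSL3} {γ : PSL3} (hγ : γ ∈ Γ) {z : P2}
    (hz : z ∈ eqSet Γ) : pact γ z ∈ eqSet Γ := by
  obtain ⟨U, hU, hzU, hc⟩ := hz
  refine ⟨pact γ⁻¹ ⁻¹' U, hU.preimage (continuous_pact _), ?_, ?_⟩
  · rw [Set.mem_preimage, pact_inv_pact]
    exact hzU
  · let e : C((pact γ⁻¹ ⁻¹' U : Set P2), U) :=
      ⟨fun w => ⟨pact γ⁻¹ w.1, w.2⟩, by
        exact ((continuous_pact _).comp continuous_subtype_val).subtype_mk _⟩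
    have himg := hc.image (f := fun f : C(U, P2) => f.comp e) (ContinuousMap.continuous_precomp e)
    refine himg.of_isClosed_subset isClosed_closure (closure_minimal ?_ himg.isClosed)
    rintro f ⟨δ, hδ, rfl⟩
    refine ⟨(pactCM (δ * γ)).restrict U, subset_closure ⟨_, Γ.mul_mem hδ hγ, rfl⟩, ?_⟩
    ext w
    show pact (δ * γ) (pact γ⁻¹ w.1) = pact δ w.1
    rw [pact_mul, pact_pact_inv]

lemma compl_invariant {Γ : Subgroup PSL3} {Ω : Set P2}
    (hΩ : Ω = eqSet Γ ∨ Ω = kulkarniRegion Γ ∨ MaxDisc Γ Ω) {γ : PSL3} (hγ : γ ∈ Γ) {z : P2}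
    (hz : z ∈ Ωᶜ) : pact γ z ∈ Ωᶜ := by
  intro h
  rcases hΩ with rfl | rfl | hm
  · apply hz
    rw [← pact_inv_pact γ z]
    exact pact_mem_eqSet (Γ.inv_mem hγ) h
  · exact h (pact_mem_kulkarniLimit hγ (not_not.1 hz))
  · rw [← hm.1.2.2.1 γ hγ] at h
    obtain ⟨w, hw, hwz⟩ := h
    rw [pact_injective γ hwz] at hw
    exact hz hw

/-! ### Passing to the pointwise stabilizer of a finite invariant family -/

/-- The elements of `G` mapping each member of a family `F` of subsets of `ℙ²` onto itself. -/
def fixer (G : Subgroup SL3) (F : Set (Set P2)) : Subgroup SL3 where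
  carrier := {A | A ∈ G ∧ ∀ s ∈ F, pact (QuotientGroup.mk A : PSL3) '' s = s}
  one_mem' := ⟨G.one_mem, fun s _ => by
    have : pact (QuotientGroup.mk (1 : SL3) : PSL3) = id := by
      funext z
      exact pact_one z
    rw [this, Set.image_id]⟩
  mul_mem' := by
    rintro A B ⟨hA, hA'⟩ ⟨hB, hB'⟩
    refine ⟨G.mul_mem hA hB, fun s hs => ?_⟩
    have : pact (QuotientGroup.mk (A * B) : PSL3) =
        pact (QuotientGroup.mk A : PSL3) ∘ pact (QuotientGroup.mk B : PSL3) := by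
      funext z
      rw [QuotientGroup.mk_mul, pact_mul]
      rfl
    rw [this, Set.image_comp, hB' s hs, hA' s hs]
  inv_mem' := by
    rintro A ⟨hA, hA'⟩
    refine ⟨G.inv_mem hA, fun s hs => ?_⟩
    conv_lhs => rw [← hA' s hs]
    rw [QuotientGroup.mk_inv, ← Set.image_comp]
    convert Set.image_id s
    exact pact_inv_pact _ _

lemma fixer_le (G : Subgroup SL3) (F : Set (Set P2)) : fixer G F ≤ G := fun _ h => h.1

/-- The fixer of a finite invariant family has finite index, so its limit cone contains, up to
finitely many left translations, all of the limit cone of `G`. -/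
lemma regSet_fixer_subset (G : Subgroup SL3) {F : Set (Set P2)} (hF : F.Finite)
    (hinv : ∀ A ∈ G, ∀ s ∈ F, pact (QuotientGroup.mk A : PSL3) '' s ∈ F) :
    regSet (fixer G F) ⊆ regSet G := by
  have : Finite F := hF
  let π : G → (F → F) := fun A s => ⟨pact (QuotientGroup.mk A.1 : PSL3) '' s.1,
    hinv A.1 A.2 s.1 s.2⟩
  let B : Set.range π → G := fun r => r.2.choose
  have hB : ∀ r, π (B r) = r.1 := fun r => r.2.choose_spec
  have hcov : limCone G ⊆ ⋃ r : Set.range π, {τ | ((B r)⁻¹.1).1 * τ ∈ limCone (fixer G F)} := by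
    refine closure_minimal ?_ (isClosed_iUnion_of_finite fun r => ?_)
    · rintro M ⟨c, A, hA, rfl⟩
      rw [Set.mem_iUnion]
      refine ⟨⟨π ⟨A, hA⟩, ⟨A, hA⟩, rfl⟩, ?_⟩
      set r : Set.range π := ⟨π ⟨A, hA⟩, ⟨A, hA⟩, rfl⟩
      refine subset_closure ⟨c, ((B r)⁻¹.1) * A, ⟨G.mul_mem (B r)⁻¹.2 hA, fun s hs => ?_⟩, by simp⟩
      have h1 : pact (QuotientGroup.mk (B r).1 : PSL3) '' s =
          pact (QuotientGroup.mk A : PSL3) '' s :=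
        congrArg Subtype.val (congrFun (hB r) ⟨s, hs⟩)
      have h2 : pact (QuotientGroup.mk ((B r)⁻¹.1 * A) : PSL3) =
          pact (QuotientGroup.mk (B r).1 : PSL3)⁻¹ ∘ pact (QuotientGroup.mk A : PSL3) := by
        funext z
        rw [QuotientGroup.mk_mul, pact_mul]
        rfl
      rw [h2, Set.image_comp, ← h1, ← Set.image_comp]
      convert Set.image_id s
      exact pact_inv_pact _ _
    · exact isClosed_closure.preimage (by fun_prop : Continuous fun τ : Mat3 => ((B r)⁻¹.1).1 * τ)
  intro z hz τ hτ h0 hτz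
  obtain ⟨r, hr⟩ := Set.mem_iUnion.1 (hcov hτ)
  refine hz _ hr ?_ ?_
  · intro h
    apply h0
    have h2 : (((B r).1) * ((B r)⁻¹.1)).1 * τ = 0 := by
      rw [Matrix.SpecialLinearGroup.coe_mul, mul_assoc, h, mul_zero]
    rw [Subgroup.coe_inv, mul_inv_cancel] at h2
    simpa using h2
  · rw [← Matrix.mulVec_mulVec, hτz, Matrix.mulVec_zero]

/-! ### Incidence geometry of the projective plane -/

lemma submodule_le_iff (z : P2) (W : Submodule ℂ V3) : z.submodule ≤ W ↔ z.rep ∈ W := by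
  rw [Projectivization.submodule_eq, Submodule.span_singleton_le_iff_mem]

/-- The projective line determined by a subspace of `ℂ³`. -/
def lineOf (W : Submodule ℂ V3) : Set P2 := {p : P2 | p.submodule ≤ W}

lemma mem_lineOf {W : Submodule ℂ V3} {z : P2} : z ∈ lineOf W ↔ z.rep ∈ W := submodule_le_iff z W

lemma proj_mem_lineOf {W : Submodule ℂ V3} {v : V3nz} : proj v ∈ lineOf W ↔ v.1 ∈ W := by
  show (proj v).submodule ≤ W ↔ _
  unfold proj
  rw [Projectivization.submodule_mk, Submodule.span_singleton_le_iff_mem]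

lemma rep_pair_independent {x y : P2} (h : x ≠ y) : LinearIndependent ℂ ![x.rep, y.rep] :=
  Projectivization.linearIndependent_pair_iff_ne.2 h

lemma finrank_span_pair {x y : P2} (h : x ≠ y) :
    Module.finrank ℂ (Submodule.span ℂ {x.rep, y.rep}) = 2 := by
  have h1 := finrank_span_eq_card (rep_pair_independent h)
  have h2 : Set.range ![x.rep, y.rep] = {x.rep, y.rep} := by
    rw [Matrix.range_cons, Matrix.range_cons, Matrix.range_empty, Set.union_empty]
    rfl
  rw [← h2]
  exact h1.trans (Fintype.card_fin 2)

lemma isLine_lineOf {W : Submodule ℂ V3} (h : Module.finrank ℂ W = 2) : IsLine (lineOf W) :=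
  ⟨W, h, rfl⟩

/-- A two-dimensional subspace containing two points is their span. -/
lemma eq_span_pair {W : Submodule ℂ V3} (hW : Module.finrank ℂ W = 2) {x y : P2} (h : x ≠ y)
    (hx : x ∈ lineOf W) (hy : y ∈ lineOf W) : W = Submodule.span ℂ {x.rep, y.rep} := by
  symm
  refine Submodule.eq_of_le_of_finrank_eq ?_ (by rw [finrank_span_pair h, hW])
  rw [Submodule.span_le]
  rintro v (rfl | rfl)
  · exact mem_lineOf.1 hx
  · exact mem_lineOf.1 hy

lemma line_unique {ℓ m : Set P2} (hℓ : IsLine ℓ) (hm : IsLine m) {x y : P2} (h : x ≠ y)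
    (hx : x ∈ ℓ) (hy : y ∈ ℓ) (hx' : x ∈ m) (hy' : y ∈ m) : ℓ = m := by
  obtain ⟨W, hW, rfl⟩ := hℓ
  obtain ⟨W', hW', rfl⟩ := hm
  have h1 := eq_span_pair hW h hx hy
  have h2 := eq_span_pair hW' h hx' hy'
  rw [h1, h2]

lemma exists_line {x y : P2} (h : x ≠ y) : ∃ ℓ, IsLine ℓ ∧ x ∈ ℓ ∧ y ∈ ℓ :=
  ⟨lineOf (Submodule.span ℂ {x.rep, y.rep}), isLine_lineOf (finrank_span_pair h),
    mem_lineOf.2 (Submodule.subset_span (by simp)), mem_lineOf.2 (Submodule.subset_span (by simp))⟩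

lemma mem_of_mem_span {ℓ : Set P2} (hℓ : IsLine ℓ) {x y z : P2} (h : x ≠ y) (hx : x ∈ ℓ)
    (hy : y ∈ ℓ) (hz : z ∈ ℓ) : ∃ a b : ℂ, z.rep = a • x.rep + b • y.rep := by
  obtain ⟨W, hW, rfl⟩ := hℓ
  have h1 := eq_span_pair hW h hx hy
  have h2 : z.rep ∈ W := mem_lineOf.1 hz
  rw [h1, Submodule.mem_span_pair] at h2
  obtain ⟨a, b, h2⟩ := h2
  exact ⟨a, b, h2.symm⟩

lemma meet {ℓ m : Set P2} (hℓ : IsLine ℓ) (hm : IsLine m) (hne : ℓ ≠ m) :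
    ∃ p, ℓ ∩ m = {p} := by
  have hex : ∃ p, p ∈ ℓ ∩ m := by
    obtain ⟨W, hW, rfl⟩ := hℓ
    obtain ⟨W', hW', rfl⟩ := hm
    have h1 := Submodule.finrank_sup_add_finrank_inf_eq W W'
    have h2 : Module.finrank ℂ ↥(W ⊔ W') ≤ 3 := by
      have := Submodule.finrank_le (W ⊔ W')
      simpa using this
    have h3 : W ⊓ W' ≠ ⊥ := by
      intro h
      rw [h, finrank_bot, hW, hW'] at h1
      omega
    obtain ⟨v, hv, hv0⟩ := Submodule.exists_mem_ne_zero_of_ne_bot h3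
    exact ⟨proj ⟨v, hv0⟩, (proj_mem_lineOf (v := ⟨v, hv0⟩)).2 hv.1,
      (proj_mem_lineOf (v := ⟨v, hv0⟩)).2 hv.2⟩
  obtain ⟨p, hp⟩ := hex
  refine ⟨p, Set.eq_singleton_iff_unique_mem.2 ⟨hp, fun q hq => ?_⟩⟩
  by_contra hqp
  exact hne (line_unique hℓ hm hqp hq.1 hp.1 hq.2 hp.2)

lemma exists_other_point {ℓ : Set P2} (hℓ : IsLine ℓ) (x : P2) : ∃ y ∈ ℓ, y ≠ x := by
  obtain ⟨W, hW, rfl⟩ := hℓ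
  have h : ¬ W ≤ x.submodule := by
    intro h
    have := Submodule.finrank_mono h
    rw [hW, x.finrank_submodule] at this
    omega
  obtain ⟨v, hv, hvx⟩ := SetLike.not_le_iff_exists.1 h
  have hv0 : v ≠ 0 := by
    rintro rfl
    exact hvx (Submodule.zero_mem _)
  refine ⟨proj ⟨v, hv0⟩, (proj_mem_lineOf (v := ⟨v, hv0⟩)).2 hv, ?_⟩
  rintro rfl
  apply hvx
  unfold proj
  rw [Projectivization.submodule_mk]
  exact Submodule.mem_span_singleton_self v

lemma exists_notMem_line {ℓ : Set P2} (hℓ : IsLine ℓ) : ∃ z, z ∉ ℓ := by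
  obtain ⟨W, hW, rfl⟩ := hℓ
  have h : ¬ (⊤ : Submodule ℂ V3) ≤ W := by
    intro h
    have := Submodule.finrank_mono h
    rw [hW, finrank_top] at this
    simp at this
  obtain ⟨v, -, hvx⟩ := SetLike.not_le_iff_exists.1 h
  have hv0 : v ≠ 0 := by
    rintro rfl
    exact hvx (Submodule.zero_mem _)
  exact ⟨proj ⟨v, hv0⟩, fun h => hvx ((proj_mem_lineOf (v := ⟨v, hv0⟩)).1 h)⟩

lemma isLine_image {ℓ : Set P2} (hℓ : IsLine ℓ) (γ : PSL3) : IsLine (pact γ '' ℓ) := by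
  obtain ⟨A, rfl⟩ := QuotientGroup.mk_surjective γ
  obtain ⟨W, hW, rfl⟩ := hℓ
  let e : V3 ≃ₗ[ℂ] V3 := Matrix.SpecialLinearGroup.toLin' A
  have he : ∀ v, e v = A.1 *ᵥ v := fun v => Matrix.SpecialLinearGroup.toLin'_apply A v
  refine ⟨W.map (e : V3 →ₗ[ℂ] V3), by rw [LinearEquiv.finrank_map_eq, hW], ?_⟩
  have key : ∀ z, z ∈ lineOf W ↔
      pact (QuotientGroup.mk A : PSL3) z ∈ lineOf (W.map (e : V3 →ₗ[ℂ] V3)) := by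
    intro z
    obtain ⟨v, rfl⟩ := isOpenQuotientMap_proj.surjective z
    rw [pact_proj, proj_mem_lineOf, proj_mem_lineOf]
    constructor
    · exact fun hv => ⟨v.1, hv, he v.1⟩
    · rintro ⟨u, hu, hue⟩
      have : u = v.1 := e.injective (hue.trans (he v.1).symm)
      exact this ▸ hu
  ext z
  constructor
  · rintro ⟨y, hy, rfl⟩
    exact (key y).1 hy
  · intro hz
    refine ⟨pact (QuotientGroup.mk A : PSL3)⁻¹ z, (key _).2 ?_, pact_pact_inv _ _⟩
    rw [pact_pact_inv]
    exact hz

/-- Two distinct points and a point off their line give a basis of `ℂ³`. -/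
lemma exists_basis {ℓ : Set P2} (hℓ : IsLine ℓ) {x y z : P2} (h : x ≠ y) (hx : x ∈ ℓ)
    (hy : y ∈ ℓ) (hz : z ∉ ℓ) :
    ∃ b : Module.Basis (Fin 3) ℂ V3, b 0 = x.rep ∧ b 1 = y.rep ∧ b 2 = z.rep := by
  obtain ⟨W, hW, rfl⟩ := hℓ
  have hxW := mem_lineOf.1 hx
  have hyW := mem_lineOf.1 hy
  have hzW : z.rep ∉ W := fun h => hz (mem_lineOf.2 h)
  have hli : LinearIndependent ℂ ![x.rep, y.rep, z.rep] := by
    rw [Fintype.linearIndependent_iff]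
    intro g hg
    simp only [Fin.sum_univ_three, Matrix.cons_val_zero, Matrix.cons_val_one,
      Matrix.cons_val] at hg
    have h2 : g 2 = 0 := by
      by_contra h2
      apply hzW
      have : z.rep = (g 2)⁻¹ • (-(g 0 • x.rep + g 1 • y.rep)) := by
        rw [eq_inv_smul_iff₀ h2]
        exact eq_neg_of_add_eq_zero_right hg
      rw [this]
      exact W.smul_mem _ (W.neg_mem (W.add_mem (W.smul_mem _ hxW) (W.smul_mem _ hyW)))
    rw [h2, zero_smul, add_zero] at hg
    obtain ⟨h0, h1⟩ := LinearIndependent.pair_iff.1 (rep_pair_independent h) _ _ hg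
    intro i
    fin_cases i <;> assumption
  refine ⟨basisOfLinearIndependentOfCardEqFinrank hli (by simp), ?_, ?_, ?_⟩ <;> simp

/-! ### Groups whose singular points lie on at most three lines -/

/-- The matrix, in a basis `b` of `ℂ³`, of the endomorphism given by a matrix in the standard
basis. -/
def inBasis (b : Module.Basis (Fin 3) ℂ V3) : Mat3 ≃ₐ[ℂ] Mat3 :=
  Matrix.toLinAlgEquiv'.trans (LinearMap.toMatrixAlgEquiv b)

lemma inBasis_apply (b : Module.Basis (Fin 3) ℂ V3) (M : Mat3) (i j : Fin 3) :
    inBasis b M i j = b.repr (M *ᵥ b j) i := by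
  unfold inBasis
  rw [AlgEquiv.trans_apply, LinearMap.toMatrixAlgEquiv_apply]
  rfl

lemma continuous_inBasis (b : Module.Basis (Fin 3) ℂ V3) : Continuous (inBasis b) :=
  (inBasis b).toLinearMap.continuous_of_finiteDimensional

lemma continuous_inBasis_apply (b : Module.Basis (Fin 3) ℂ V3) (i j : Fin 3) :
    Continuous fun M => inBasis b M i j :=
  (continuous_inBasis b).matrix_elem i j

lemma inBasis_mulVec (b : Module.Basis (Fin 3) ℂ V3) (M : Mat3) (v : V3) :
    inBasis b M *ᵥ (b.repr v) = b.repr (M *ᵥ v) :=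
  LinearMap.toMatrix_mulVec_repr b b (Matrix.toLin' M) v

/-- The first two standard basis vectors are eigenvectors of the matrix. -/
def Tri (M : Mat3) : Prop := M 1 0 = 0 ∧ M 2 0 = 0 ∧ M 0 1 = 0 ∧ M 2 1 = 0

/-- A closed condition on matrices which is stable under scaling passes from `H` to its limit
cone. -/
lemma limCone_subset {H : Subgroup SL3} {C : Set Mat3} (hC : IsClosed C)
    (h : ∀ A ∈ H, ∀ c : ℂ, c • A.1 ∈ C) : limCone H ⊆ C := by
  refine closure_minimal ?_ hC
  rintro M ⟨c, A, hA, rfl⟩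
  exact h A hA c

lemma tri_limCone (b : Module.Basis (Fin 3) ℂ V3) {H : Subgroup SL3}
    (h : ∀ A ∈ H, Tri (inBasis b A.1)) {τ : Mat3} (hτ : τ ∈ limCone H) : Tri (inBasis b τ) := by
  have hc : IsClosed {M : Mat3 | Tri (inBasis b M)} := by
    have e := continuous_inBasis_apply b
    exact (isClosed_eq (e 1 0) continuous_const).inter <|
      (isClosed_eq (e 2 0) continuous_const).inter <|
      (isClosed_eq (e 0 1) continuous_const).inter (isClosed_eq (e 2 1) continuous_const)
  refine limCone_subset hc (fun A hA c => ?_) hτ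
  obtain ⟨h1, h2, h3, h4⟩ := h A hA
  show Tri _
  rw [map_smul]
  exact ⟨by simp [h1], by simp [h2], by simp [h3], by simp [h4]⟩

/-- A set covered by three lines contains at most three lines. -/
lemma lines_le_three {X : Set P2} (φ : Fin 3 → (V3 →ₗ[ℂ] ℂ)) (h0 : ∀ i, φ i ≠ 0)
    (hX : ∀ z ∈ X, ∃ i, φ i z.rep = 0) : (linesIn X).encard ≤ 3 := by
  have hsub : linesIn X ⊆ (fun i => lineOf (LinearMap.ker (φ i))) '' Set.univ := by
    rintro ℓ ⟨⟨W, hW, rfl⟩, hℓ⟩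
    have hcov : ⋃ i, (((LinearMap.ker (φ i)).comap W.subtype : Submodule ℂ W) : Set W) =
        Set.univ := by
      rw [Set.eq_univ_iff_forall]
      rintro ⟨v, hv⟩
      rw [Set.mem_iUnion]
      by_cases hv0 : v = 0
      · exact ⟨0, by simp [hv0]⟩
      obtain ⟨i, hi⟩ := hX (proj ⟨v, hv0⟩)
        (hℓ ((proj_mem_lineOf (v := ⟨v, hv0⟩)).2 hv))
      refine ⟨i, ?_⟩
      obtain ⟨c, hc, hcv⟩ := (proj_eq_iff _ ⟨v, hv0⟩).1 (proj_rep (proj ⟨v, hv0⟩))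
      show φ i v = 0
      rw [show v = c • (proj ⟨v, hv0⟩).rep from hcv, map_smul, hi, smul_zero]
    obtain ⟨i, hi⟩ := Subspace.exists_eq_top_of_iUnion_eq_univ hcov
    refine ⟨i, trivial, ?_⟩
    have hle : W ≤ LinearMap.ker (φ i) := by
      intro v hv
      have : (⟨v, hv⟩ : W) ∈ (LinearMap.ker (φ i)).comap W.subtype := by
        rw [hi]
        trivial
      exact this
    have hk : Module.finrank ℂ (LinearMap.ker (φ i)) ≤ 2 := by
      have hlt : LinearMap.ker (φ i) < ⊤ := by
        rw [lt_top_iff_ne_top]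
        exact fun h => h0 i (LinearMap.ker_eq_top.1 h)
      have := Submodule.finrank_lt_finrank_of_lt hlt
      rw [finrank_top] at this
      simp only [Module.finrank_fintype_fun_eq_card, Fintype.card_fin] at this
      omega
    have := Submodule.eq_of_le_of_finrank_le hle (by rw [hW]; exact hk)
    show lineOf _ = lineOf _
    rw [this]
  calc (linesIn X).encard ≤ _ := Set.encard_le_encard hsub
    _ ≤ (Set.univ : Set (Fin 3)).encard := Set.encard_image_le _ _
    _ = 3 := by simp

/-- The coordinates, in the basis `b`, of a vector killed by a matrix of the form `Tri`. -/
lemma tri_kernel (b : Module.Basis (Fin 3) ℂ V3) {τ : Mat3} (ht : Tri (inBasis b τ)) {v : V3}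
    (h : τ *ᵥ v = 0) :
    inBasis b τ 0 0 * b.repr v 0 + inBasis b τ 0 2 * b.repr v 2 = 0 ∧
    inBasis b τ 1 1 * b.repr v 1 + inBasis b τ 1 2 * b.repr v 2 = 0 ∧
    inBasis b τ 2 2 * b.repr v 2 = 0 := by
  obtain ⟨h1, h2, h3, h4⟩ := ht
  have hm := inBasis_mulVec b τ v
  rw [h, map_zero] at hm
  have e0 := congrFun hm 0
  have e1 := congrFun hm 1
  have e2 := congrFun hm 2
  simp only [Matrix.mulVec, dotProduct, Fin.sum_univ_three, h1, h2, h3, h4, zero_mul, add_zero,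
    zero_add, Finsupp.coe_zero, Pi.zero_apply] at e0 e1 e2
  exact ⟨e0, e1, e2⟩

lemma eq_zero_of_tri (b : Module.Basis (Fin 3) ℂ V3) {τ : Mat3} (ht : Tri (inBasis b τ))
    (h00 : inBasis b τ 0 0 = 0) (h11 : inBasis b τ 1 1 = 0) (h22 : inBasis b τ 2 2 = 0)
    (h02 : inBasis b τ 0 2 = 0) (h12 : inBasis b τ 1 2 = 0) : τ = 0 := by
  obtain ⟨h1, h2, h3, h4⟩ := ht
  have : inBasis b τ = 0 := by
    ext i j
    fin_cases i <;> fin_cases j <;> assumption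
  exact (map_eq_zero_iff _ (inBasis b).injective).1 this

/-- If the elements of `H` are simultaneously diagonalized by a shear of the basis `b`, then the
singular points of `H` lie on three lines. -/
lemma shear_case (b : Module.Basis (Fin 3) ℂ V3) {H : Subgroup SL3} (s t : ℂ)
    (h : ∀ A ∈ H, Tri (inBasis b A.1))
    (hs : ∀ A ∈ H, inBasis b A.1 0 2 = s * (inBasis b A.1 2 2 - inBasis b A.1 0 0))
    (ht : ∀ A ∈ H, inBasis b A.1 1 2 = t * (inBasis b A.1 2 2 - inBasis b A.1 1 1)) :
    (linesIn (regSet H)ᶜ).encard ≤ 3 := by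
  refine lines_le_three ![b.coord 2, b.coord 0 - s • b.coord 2, b.coord 1 - t • b.coord 2] ?_ ?_
  · intro i hi
    fin_cases i
    · simpa using LinearMap.congr_fun hi (b 2)
    · simpa using LinearMap.congr_fun hi (b 0)
    · simpa using LinearMap.congr_fun hi (b 1)
  intro z hz
  simp only [regSet, Set.mem_compl_iff, Set.mem_ofPred_eq] at hz
  push Not at hz
  obtain ⟨τ, hτ, h0, hk⟩ := hz
  have hT := tri_limCone b h hτ
  have e := continuous_inBasis_apply b
  have hs' : inBasis b τ 0 2 = s * (inBasis b τ 2 2 - inBasis b τ 0 0) := by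
    refine limCone_subset (C := {M : Mat3 | inBasis b M 0 2 =
      s * (inBasis b M 2 2 - inBasis b M 0 0)}) (isClosed_eq (e 0 2)
      (continuous_const.mul ((e 2 2).sub (e 0 0)))) (fun A hA c => ?_) hτ
    simp only [Set.mem_ofPred_eq, map_smul, Matrix.smul_apply, smul_eq_mul, hs A hA]
    ring
  have ht' : inBasis b τ 1 2 = t * (inBasis b τ 2 2 - inBasis b τ 1 1) := by
    refine limCone_subset (C := {M : Mat3 | inBasis b M 1 2 =
      t * (inBasis b M 2 2 - inBasis b M 1 1)}) (isClosed_eq (e 1 2)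
      (continuous_const.mul ((e 2 2).sub (e 1 1)))) (fun A hA c => ?_) hτ
    simp only [Set.mem_ofPred_eq, map_smul, Matrix.smul_apply, smul_eq_mul, ht A hA]
    ring
  obtain ⟨k0, k1, k2⟩ := tri_kernel b hT hk
  by_contra hne
  push Not at hne
  have n0 : b.repr z.rep 2 ≠ 0 := by simpa using hne 0
  have n1 : b.repr z.rep 0 - s * b.repr z.rep 2 ≠ 0 := by simpa using hne 1
  have n2 : b.repr z.rep 1 - t * b.repr z.rep 2 ≠ 0 := by simpa using hne 2
  have z22 : inBasis b τ 2 2 = 0 := (mul_eq_zero.1 k2).resolve_right n0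
  have z00 : inBasis b τ 0 0 = 0 := by
    refine (mul_eq_zero.1 (?_ : inBasis b τ 0 0 *
      (b.repr z.rep 0 - s * b.repr z.rep 2) = 0)).resolve_right n1
    rw [hs', z22] at k0
    linear_combination k0
  have z11 : inBasis b τ 1 1 = 0 := by
    refine (mul_eq_zero.1 (?_ : inBasis b τ 1 1 *
      (b.repr z.rep 1 - t * b.repr z.rep 2) = 0)).resolve_right n2
    rw [ht', z22] at k1
    linear_combination k1
  exact h0 (eq_zero_of_tri b hT z00 z11 z22 (by rw [hs', z22, z00]; simp)
    (by rw [ht', z22, z11]; simp))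

/-- If all diagonal entries of each element of `H` have the same modulus, then the singular points
of `H` lie on one line. -/
lemma tri_case (b : Module.Basis (Fin 3) ℂ V3) {H : Subgroup SL3}
    (h : ∀ A ∈ H, Tri (inBasis b A.1))
    (h0 : ∀ A ∈ H, ‖inBasis b A.1 0 0‖ = ‖inBasis b A.1 2 2‖)
    (h1 : ∀ A ∈ H, ‖inBasis b A.1 1 1‖ = ‖inBasis b A.1 2 2‖) :
    (linesIn (regSet H)ᶜ).encard ≤ 3 := by
  refine lines_le_three (fun _ => b.coord 2) ?_ ?_
  · intro i hi
    simpa using LinearMap.congr_fun hi (b 2)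
  intro z hz
  refine ⟨0, ?_⟩
  simp only [regSet, Set.mem_compl_iff, Set.mem_ofPred_eq] at hz
  push Not at hz
  obtain ⟨τ, hτ, hne, hk⟩ := hz
  have hT := tri_limCone b h hτ
  have e := continuous_inBasis_apply b
  have h0' : ‖inBasis b τ 0 0‖ = ‖inBasis b τ 2 2‖ := by
    refine limCone_subset (C := {M : Mat3 | ‖inBasis b M 0 0‖ = ‖inBasis b M 2 2‖})
      (isClosed_eq (e 0 0).norm (e 2 2).norm) (fun A hA c => ?_) hτ
    simp only [Set.mem_ofPred_eq, map_smul, Matrix.smul_apply, norm_smul, h0 A hA]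
  have h1' : ‖inBasis b τ 1 1‖ = ‖inBasis b τ 2 2‖ := by
    refine limCone_subset (C := {M : Mat3 | ‖inBasis b M 1 1‖ = ‖inBasis b M 2 2‖})
      (isClosed_eq (e 1 1).norm (e 2 2).norm) (fun A hA c => ?_) hτ
    simp only [Set.mem_ofPred_eq, map_smul, Matrix.smul_apply, norm_smul, h1 A hA]
  obtain ⟨k0, k1, k2⟩ := tri_kernel b hT hk
  by_contra n0
  have n0 : b.repr z.rep 2 ≠ 0 := n0
  have z22 : inBasis b τ 2 2 = 0 := (mul_eq_zero.1 k2).resolve_right n0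
  rw [z22, norm_zero, norm_eq_zero] at h0' h1'
  rw [h0', zero_mul, zero_add] at k0
  rw [h1', zero_mul, zero_add] at k1
  exact hne (eq_zero_of_tri b hT h0' h1' z22 ((mul_eq_zero.1 k0).resolve_right n0)
    ((mul_eq_zero.1 k1).resolve_right n0))

/-- If `g (c - 1) = α (c - 1) g`, then `gᵏ c g⁻ᵏ = 1 + αᵏ (c - 1)`; when `|α| < 1` these
conjugates tend to `1`, so discreteness forces `c` to be trivial. -/
lemma eq_one_of_contracted {Γ : Subgroup PSL3} (hΓ : DiscreteTopology ↥Γ) {g c : SL3}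
    (hg : g ∈ liftSL Γ) (hc : c ∈ liftSL Γ) {α : ℂ}
    (h : g.1 * (c.1 - 1) = α • ((c.1 - 1) * g.1)) (hα : ‖α‖ < 1) : c = 1 := by
  have hpow : ∀ k : ℕ, (g ^ k).1 * (c.1 - 1) = α ^ k • ((c.1 - 1) * (g ^ k).1) := by
    intro k
    induction k with
    | zero => simp
    | succ k ih =>
      have h1 : (g ^ (k + 1)).1 = (g ^ k).1 * g.1 := by rw [pow_succ]; rfl
      rw [h1, mul_assoc, h, Matrix.mul_smul, ← mul_assoc, ih, Matrix.smul_mul, smul_smul,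
        pow_succ, mul_assoc, mul_comm α]
  have hval : ∀ k : ℕ, (g ^ k * c * (g ^ k)⁻¹).1 = 1 + α ^ k • (c.1 - 1) := by
    intro k
    have h1 : (g ^ k).1 * ((g ^ k)⁻¹).1 = 1 := by
      have : (g ^ k * (g ^ k)⁻¹).1 = 1 := by rw [mul_inv_cancel]; rfl
      exact this
    have h2 : (g ^ k * c * (g ^ k)⁻¹).1 = (g ^ k).1 * c.1 * ((g ^ k)⁻¹).1 := rfl
    have h3 : (g ^ k).1 * c.1 = (g ^ k).1 + α ^ k • ((c.1 - 1) * (g ^ k).1) := by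
      rw [← hpow k, mul_sub, mul_one]
      abel
    rw [h2, h3, add_mul, h1, Matrix.smul_mul, mul_assoc, h1, mul_one]
  have hlim : Tendsto (fun k : ℕ => (g ^ k * c * (g ^ k)⁻¹).1) atTop (𝓝 (1 : Mat3)) := by
    simp only [hval]
    have h1 : Tendsto (fun k : ℕ => α ^ k) atTop (𝓝 0) :=
      tendsto_pow_atTop_nhds_zero_of_norm_lt_one hα
    have h2 := (h1.smul_const (c.1 - 1)).const_add (1 : Mat3)
    simpa using h2
  obtain ⟨k, hk⟩ := (eventually_eq_one hΓ _ (fun k => (liftSL Γ).mul_mem ((liftSL Γ).mul_mem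
    ((liftSL Γ).pow_mem hg k) hc) ((liftSL Γ).inv_mem ((liftSL Γ).pow_mem hg k))) hlim).exists
  have hk' : (QuotientGroup.mk c : PSL3) = 1 := by
    rw [QuotientGroup.mk_mul, QuotientGroup.mk_mul, QuotientGroup.mk_inv] at hk
    exact conj_eq_one_iff.1 hk
  have hcen : c ∈ Subgroup.center SL3 := (QuotientGroup.eq_one_iff c).1 hk'
  have hcomm : g.1 * c.1 = c.1 * g.1 := congrArg Subtype.val (Subgroup.mem_center_iff.1 hcen g)
  have h1 : (1 - α) • ((c.1 - 1) * g.1) = 0 := by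
    rw [sub_smul, one_smul, ← h, mul_sub, sub_mul, hcomm, mul_one, one_mul, sub_self]
  have hα1 : 1 - α ≠ 0 := by
    intro h
    rw [← sub_eq_zero.1 h] at hα
    simp at hα
  have h2 : (c.1 - 1) * g.1 = 0 := (smul_eq_zero.1 h1).resolve_left hα1
  have h3 : c * g = g := Subtype.ext (by
    rw [sub_mul, one_mul, sub_eq_zero] at h2
    exact h2)
  exact mul_eq_right.1 h3

lemma eq_one_of_scaled {Γ : Subgroup PSL3} (hΓ : DiscreteTopology ↥Γ) {g c : SL3}
    (hg : g ∈ liftSL Γ) (hc : c ∈ liftSL Γ) {α : ℂ} (hα0 : α ≠ 0)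
    (h : g.1 * (c.1 - 1) = α • ((c.1 - 1) * g.1)) (hα : ‖α‖ ≠ 1) : c = 1 := by
  rcases lt_or_gt_of_ne hα with hlt | hgt
  · exact eq_one_of_contracted hΓ hg hc h hlt
  refine eq_one_of_contracted hΓ ((liftSL Γ).inv_mem hg) hc (α := α⁻¹) ?_ (by
    rw [norm_inv]
    exact inv_lt_one_of_one_lt₀ hgt)
  have h1 : g.1 * (g⁻¹).1 = 1 := by
    have : (g * g⁻¹).1 = 1 := by rw [mul_inv_cancel]; rfl
    exact this
  have h2 : (g⁻¹).1 * g.1 = 1 := by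
    have : (g⁻¹ * g).1 = 1 := by rw [inv_mul_cancel]; rfl
    exact this
  have h3 : (g⁻¹).1 * (g.1 * (c.1 - 1)) * (g⁻¹).1 =
      (g⁻¹).1 * (α • ((c.1 - 1) * g.1)) * (g⁻¹).1 := by rw [h]
  rw [← mul_assoc, h2, one_mul, Matrix.mul_smul, Matrix.smul_mul, mul_assoc, mul_assoc, h1,
    mul_one] at h3
  rw [h3, smul_smul, inv_mul_cancel₀ hα0, one_smul]

lemma tri_entry_ne_zero (b : Module.Basis (Fin 3) ℂ V3) {g : SL3}
    (hg : Tri (inBasis b g.1)) : inBasis b g.1 0 0 ≠ 0 ∧ inBasis b g.1 1 1 ≠ 0 ∧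
      inBasis b g.1 2 2 ≠ 0 := by
  obtain ⟨h1, h2, h3, h4⟩ := hg
  have hu : inBasis b g.1 * inBasis b (g⁻¹).1 = 1 := by
    have : (g * g⁻¹).1 = 1 := by rw [mul_inv_cancel]; rfl
    rw [← map_mul, ← map_one (inBasis b)]
    exact congrArg _ this
  have hu' : inBasis b (g⁻¹).1 * inBasis b g.1 = 1 := by
    have : (g⁻¹ * g).1 = 1 := by rw [inv_mul_cancel]; rfl
    rw [← map_mul, ← map_one (inBasis b)]
    exact congrArg _ this
  have e0 := congrFun (congrFun hu' 0) 0
  have e1 := congrFun (congrFun hu' 1) 1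
  have e2 := congrFun (congrFun hu 2) 2
  simp only [Matrix.mul_apply, Fin.sum_univ_three, h1, h2, h3, h4, Matrix.one_apply_eq,
    mul_zero, zero_mul, add_zero, zero_add] at e0 e1 e2
  exact ⟨right_ne_zero_of_mul_eq_one e0, right_ne_zero_of_mul_eq_one e1,
    left_ne_zero_of_mul_eq_one e2⟩

/-- The commutator `c` of two elements of the form `Tri` is a translation: `c - 1` has entries in
the last column only. If conjugation by `g` scales it by a factor of modulus different from `1`,
then `g` and `h` commute. -/
lemma commute_of_scaled {Γ : Subgroup PSL3} (hΓ : DiscreteTopology ↥Γ)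
    (b : Module.Basis (Fin 3) ℂ V3) {g h : SL3} (hg : g ∈ liftSL Γ) (hh : h ∈ liftSL Γ)
    (tg : Tri (inBasis b g.1)) (th : Tri (inBasis b h.1)) {μ : ℂ} (hμ0 : μ ≠ 0)
    (hμ : ‖μ‖ ≠ ‖inBasis b g.1 2 2‖)
    (h0 : (inBasis b g.1 0 0 - μ) *
      (inBasis b g.1 * inBasis b h.1 - inBasis b h.1 * inBasis b g.1) 0 2 = 0)
    (h1 : (inBasis b g.1 1 1 - μ) *
      (inBasis b g.1 * inBasis b h.1 - inBasis b h.1 * inBasis b g.1) 1 2 = 0) :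
    inBasis b g.1 * inBasis b h.1 = inBasis b h.1 * inBasis b g.1 := by
  set G := inBasis b g.1 with hG
  set K := inBasis b h.1 with hK
  set n := G * K - K * G with hn
  have f0 : G 2 2 ≠ 0 := (tri_entry_ne_zero b tg).2.2
  have f1 : K 2 2 ≠ 0 := (tri_entry_ne_zero b th).2.2
  let c : SL3 := g * h * (h * g)⁻¹
  have hc : c ∈ liftSL Γ := (liftSL Γ).mul_mem ((liftSL Γ).mul_mem hg hh)
    ((liftSL Γ).inv_mem ((liftSL Γ).mul_mem hh hg))
  obtain ⟨g1, g2, g3, g4⟩ := tg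
  obtain ⟨k1, k2, k3, k4⟩ := th
  -- The commutator has a single possibly nonzero column.
  obtain ⟨n00, n10, n20, n01, n11, n21, n22⟩ : n 0 0 = 0 ∧ n 1 0 = 0 ∧ n 2 0 = 0 ∧
      n 0 1 = 0 ∧ n 1 1 = 0 ∧ n 2 1 = 0 ∧ n 2 2 = 0 := by
    refine ⟨?_, ?_, ?_, ?_, ?_, ?_, ?_⟩ <;>
    · simp only [hn, Matrix.sub_apply, Matrix.mul_apply, Fin.sum_univ_three, g1, g2, g3, g4,
        k1, k2, k3, k4]
      ring
  clear_value n
  have hcol : ∀ M : Mat3, M 2 0 = 0 → M 2 1 = 0 → n * M = M 2 2 • n := by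
    intro M m0 m1
    ext i j
    fin_cases i <;> fin_cases j <;>
      simp [Matrix.mul_apply, Fin.sum_univ_three, n00, n10, n20, n01, n11, n21, n22, m0, m1,
        mul_comm]
  have hgn : G * n = μ • n := by
    ext i j
    fin_cases i <;> fin_cases j <;>
      simp [Matrix.mul_apply, Fin.sum_univ_three, n00, n10, n20, n01, n11, n21, n22,
        g1, g2, g3, g4]
    · exact (mul_eq_zero.1 h0).imp_left sub_eq_zero.1
    · exact (mul_eq_zero.1 h1).imp_left sub_eq_zero.1
  have hKG20 : (K * G) 2 0 = 0 := by simp [Matrix.mul_apply, Fin.sum_univ_three, g1, g2, k2, k4]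
  have hKG21 : (K * G) 2 1 = 0 := by simp [Matrix.mul_apply, Fin.sum_univ_three, g3, g4, k2, k4]
  have hKG22 : (K * G) 2 2 = K 2 2 * G 2 2 := by simp [Matrix.mul_apply, Fin.sum_univ_three, k2, k4]
  have hcn : inBasis b (c.1 - 1) * (K * G) = n := by
    have e1 : c * (h * g) = g * h := inv_mul_cancel_right _ _
    have e2 : c.1 * (h.1 * g.1) = g.1 * h.1 := congrArg Subtype.val e1
    have e3 : inBasis b c.1 * (K * G) = G * K := by
      rw [hG, hK, ← map_mul, ← map_mul, e2, map_mul]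
    rw [map_sub, map_one, sub_mul, one_mul, e3, hn]
  have hinv : (K * G) * inBasis b ((h * g)⁻¹).1 = 1 := by
    have : (h.1 * g.1) * ((h * g)⁻¹).1 = 1 := by
      have : (h * g * (h * g)⁻¹).1 = 1 := by rw [mul_inv_cancel]; rfl
      exact this
    rw [hG, hK, ← map_mul, ← map_mul, this, map_one]
  have hN : (K 2 2 * G 2 2) • inBasis b (c.1 - 1) = n := by
    have e1 := hcol (K * G) hKG20 hKG21
    rw [hKG22] at e1
    have e2 : inBasis b (c.1 - 1) = n * inBasis b ((h * g)⁻¹).1 := by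
      rw [← hcn, mul_assoc, hinv, mul_one]
    rw [e2, ← Matrix.smul_mul, ← e1, mul_assoc, hinv, mul_one]
  have hkg : K 2 2 * G 2 2 ≠ 0 := mul_ne_zero f1 f0
  have hrel : g.1 * (c.1 - 1) = (μ / G 2 2) • ((c.1 - 1) * g.1) := by
    apply (inBasis b).injective
    rw [map_smul, map_mul, map_mul, ← hG]
    apply smul_right_injective Mat3 hkg
    show (K 2 2 * G 2 2) • (G * inBasis b (c.1 - 1)) =
      (K 2 2 * G 2 2) • ((μ / G 2 2) • (inBasis b (c.1 - 1) * G))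
    rw [← Matrix.mul_smul, smul_comm, ← Matrix.smul_mul, hN, hgn, hcol G g2 g4, smul_smul,
      div_mul_cancel₀ _ f0]
  have hc1 : c = 1 := eq_one_of_scaled hΓ hg hc (div_ne_zero hμ0 f0) hrel (by
    rw [norm_div]
    intro h
    exact hμ ((div_eq_one_iff_eq (norm_ne_zero_iff.2 f0)).1 h))
  have hgh : g * h = h * g := mul_inv_eq_one.1 hc1
  rw [hG, hK, ← map_mul, ← map_mul]
  exact congrArg _ (congrArg Subtype.val hgh)

/-- The entries of the commutation relation in the last column. -/
lemma entries_of_commute {G K : Mat3} (tG : Tri G) (tK : Tri K) (h : G * K = K * G) :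
    K 0 2 * (G 2 2 - G 0 0) = G 0 2 * (K 2 2 - K 0 0) ∧
    K 1 2 * (G 2 2 - G 1 1) = G 1 2 * (K 2 2 - K 1 1) := by
  obtain ⟨g1, g2, g3, g4⟩ := tG
  obtain ⟨k1, k2, k3, k4⟩ := tK
  have e0 := congrFun (congrFun h 0) 2
  have e1 := congrFun (congrFun h 1) 2
  simp only [Matrix.mul_apply, Fin.sum_univ_three, g1, g3, k1, k3] at e0 e1
  exact ⟨by linear_combination -e0, by linear_combination -e1⟩

/-- A discrete group of matrices fixing a line pointwise (first two diagonal entries equal). -/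
lemma pointwise_line_case {Γ : Subgroup PSL3} (hΓ : DiscreteTopology ↥Γ)
    (b : Module.Basis (Fin 3) ℂ V3) {H : Subgroup SL3} (hH : H ≤ liftSL Γ)
    (h : ∀ A ∈ H, Tri (inBasis b A.1))
    (he : ∀ A ∈ H, inBasis b A.1 0 0 = inBasis b A.1 1 1) :
    (linesIn (regSet H)ᶜ).encard ≤ 3 := by
  by_cases hall : ∀ A ∈ H, ‖inBasis b A.1 0 0‖ = ‖inBasis b A.1 2 2‖
  · exact tri_case b h hall fun A hA => by rw [← he A hA, hall A hA]
  push Not at hall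
  obtain ⟨g, hg, hne⟩ := hall
  have hcomm : ∀ A ∈ H, inBasis b g.1 * inBasis b A.1 = inBasis b A.1 * inBasis b g.1 := by
    intro A hA
    refine commute_of_scaled hΓ b (hH hg) (hH hA) (h g hg) (h A hA)
      (tri_entry_ne_zero b (h g hg)).1 hne (by rw [sub_self, zero_mul]) ?_
    rw [he g hg, sub_self, zero_mul]
  have d0 : inBasis b g.1 2 2 - inBasis b g.1 0 0 ≠ 0 := by
    intro h
    exact hne (by rw [sub_eq_zero.1 h])
  have d1 : inBasis b g.1 2 2 - inBasis b g.1 1 1 ≠ 0 := by rwa [← he g hg]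
  refine shear_case b (inBasis b g.1 0 2 / (inBasis b g.1 2 2 - inBasis b g.1 0 0))
    (inBasis b g.1 1 2 / (inBasis b g.1 2 2 - inBasis b g.1 1 1)) h ?_ ?_
  · intro A hA
    have := (entries_of_commute (h g hg) (h A hA) (hcomm A hA)).1
    rw [div_mul_eq_mul_div, eq_div_iff d0, this]
  · intro A hA
    have := (entries_of_commute (h g hg) (h A hA) (hcomm A hA)).2
    rw [div_mul_eq_mul_div, eq_div_iff d1, this]

/-- A discrete group of matrices fixing a point and each line through another fixed point, in a
basis where the entries at `(0,0)` and `(2,2)` agree and the entry at `(0,2)` vanishes. -/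
lemma pencil_case {Γ : Subgroup PSL3} (hΓ : DiscreteTopology ↥Γ)
    (b : Module.Basis (Fin 3) ℂ V3) {H : Subgroup SL3} (hH : H ≤ liftSL Γ)
    (h : ∀ A ∈ H, Tri (inBasis b A.1)) (h02 : ∀ A ∈ H, inBasis b A.1 0 2 = 0)
    (he : ∀ A ∈ H, inBasis b A.1 0 0 = inBasis b A.1 2 2) :
    (linesIn (regSet H)ᶜ).encard ≤ 3 := by
  by_cases hall : ∀ A ∈ H, ‖inBasis b A.1 1 1‖ = ‖inBasis b A.1 2 2‖
  · exact tri_case b h (fun A hA => by rw [he A hA]) hall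
  push Not at hall
  obtain ⟨g, hg, hne⟩ := hall
  have hcomm : ∀ A ∈ H, inBasis b g.1 * inBasis b A.1 = inBasis b A.1 * inBasis b g.1 := by
    intro A hA
    refine commute_of_scaled hΓ b (hH hg) (hH hA) (h g hg) (h A hA)
      (tri_entry_ne_zero b (h g hg)).2.1 hne ?_ (by rw [sub_self, zero_mul])
    obtain ⟨g1, g2, g3, g4⟩ := h g hg
    obtain ⟨k1, k2, k3, k4⟩ := h A hA
    simp [Matrix.mul_apply, Fin.sum_univ_three, h02 g hg, h02 A hA, g3, k3]
  have d1 : inBasis b g.1 2 2 - inBasis b g.1 1 1 ≠ 0 := by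
    intro h
    exact hne (by rw [sub_eq_zero.1 h])
  refine shear_case b 0 (inBasis b g.1 1 2 / (inBasis b g.1 2 2 - inBasis b g.1 1 1)) h
    (fun A hA => by rw [h02 A hA, zero_mul]) ?_
  intro A hA
  have := (entries_of_commute (h g hg) (h A hA) (hcomm A hA)).2
  rw [div_mul_eq_mul_div, eq_div_iff d1, this]

/-! ### Groups fixing points and lines -/

lemma eq_of_rep_eq_smul {x y : P2} {c : ℂ} (h : y.rep = c • x.rep) : x = y := by
  rw [← proj_rep x, ← proj_rep y, proj_eq_iff]
  refine ⟨c, ?_, h⟩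
  rintro rfl
  exact y.rep_nonzero (by rw [h, zero_smul])

/-- A projectivity fixing a point scales its representative. -/
lemma exists_eigenvalue {A : SL3} {x : P2} (h : pact (QuotientGroup.mk A : PSL3) x = x) :
    ∃ c : ℂ, A.1 *ᵥ x.rep = c • x.rep := by
  rw [← proj_rep x, pact_proj, proj_rep] at h
  obtain ⟨c, -, hc⟩ := (proj_eq_iff ⟨x.rep, x.rep_nonzero⟩
    ⟨A.1 *ᵥ x.rep, mulVec_SL_ne_zero A x.rep_nonzero⟩).1 ((proj_rep x).trans h.symm)
  exact ⟨c, hc⟩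

lemma exists_smul_pact (A : SL3) (x : P2) :
    ∃ c : ℂ, A.1 *ᵥ x.rep = c • (pact (QuotientGroup.mk A : PSL3) x).rep := by
  have h : pact (QuotientGroup.mk A : PSL3) x =
      proj ⟨A.1 *ᵥ x.rep, mulVec_SL_ne_zero A x.rep_nonzero⟩ := by
    conv_lhs => rw [← proj_rep x]
    rw [pact_proj]
  obtain ⟨c, -, hc⟩ := (proj_eq_iff
    ⟨(pact (QuotientGroup.mk A : PSL3) x).rep, Projectivization.rep_nonzero _⟩
    ⟨A.1 *ᵥ x.rep, mulVec_SL_ne_zero A x.rep_nonzero⟩).1 ((proj_rep _).trans h)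
  exact ⟨c, hc⟩

/-- A projectivity preserving a line maps the vectors of that line to vectors of that line. -/
lemma mulVec_mem_line {A : SL3} {ℓ : Set P2} (hℓ : IsLine ℓ) {x y z : P2} (h : x ≠ y)
    (hx : x ∈ ℓ) (hy : y ∈ ℓ) (hz : z ∈ ℓ) (hA : pact (QuotientGroup.mk A : PSL3) '' ℓ = ℓ) :
    ∃ p q : ℂ, A.1 *ᵥ z.rep = p • x.rep + q • y.rep := by
  have h1 : pact (QuotientGroup.mk A : PSL3) z ∈ ℓ := hA ▸ Set.mem_image_of_mem _ hz
  obtain ⟨p, q, hpq⟩ := mem_of_mem_span hℓ h hx hy h1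
  obtain ⟨c, hc⟩ := exists_smul_pact A z
  exact ⟨c * p, c * q, by rw [hc, hpq, smul_add, smul_smul, smul_smul]⟩

/-- The fixer of three non-collinear points is diagonal. -/
lemma three_points_case {H : Subgroup SL3} {ℓ : Set P2} (hℓ : IsLine ℓ) {x y z : P2} (h : x ≠ y)
    (hx : x ∈ ℓ) (hy : y ∈ ℓ) (hz : z ∉ ℓ)
    (hfx : ∀ A ∈ H, pact (QuotientGroup.mk A : PSL3) x = x)
    (hfy : ∀ A ∈ H, pact (QuotientGroup.mk A : PSL3) y = y)
    (hfz : ∀ A ∈ H, pact (QuotientGroup.mk A : PSL3) z = z) :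
    (linesIn (regSet H)ᶜ).encard ≤ 3 := by
  obtain ⟨b, b0, b1, b2⟩ := exists_basis hℓ h hx hy hz
  have key : ∀ A ∈ H, ∀ i j : Fin 3, i ≠ j → inBasis b A.1 i j = 0 := by
    intro A hA i j hij
    have : ∃ c : ℂ, A.1 *ᵥ b j = c • b j := by
      fin_cases j
      · exact b0.symm ▸ exists_eigenvalue (hfx A hA)
      · exact b1.symm ▸ exists_eigenvalue (hfy A hA)
      · exact b2.symm ▸ exists_eigenvalue (hfz A hA)
    obtain ⟨c, hc⟩ := this
    rw [inBasis_apply, hc]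
    simp [hij.symm]
  refine shear_case b 0 0 (fun A hA => ?_) (fun A hA => ?_) (fun A hA => ?_)
  · exact ⟨key A hA _ _ (by decide), key A hA _ _ (by decide), key A hA _ _ (by decide),
      key A hA _ _ (by decide)⟩
  · rw [key A hA _ _ (by decide), zero_mul]
  · rw [key A hA _ _ (by decide), zero_mul]

/-- The fixer of three collinear points fixes their line pointwise. -/
lemma collinear_case {Γ : Subgroup PSL3} (hΓ : DiscreteTopology ↥Γ) {H : Subgroup SL3}
    (hH : H ≤ liftSL Γ) {ℓ : Set P2} (hℓ : IsLine ℓ) {x y w : P2} (h : x ≠ y) (hxw : x ≠ w)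
    (hyw : y ≠ w) (hx : x ∈ ℓ) (hy : y ∈ ℓ) (hw : w ∈ ℓ)
    (hfx : ∀ A ∈ H, pact (QuotientGroup.mk A : PSL3) x = x)
    (hfy : ∀ A ∈ H, pact (QuotientGroup.mk A : PSL3) y = y)
    (hfw : ∀ A ∈ H, pact (QuotientGroup.mk A : PSL3) w = w) :
    (linesIn (regSet H)ᶜ).encard ≤ 3 := by
  obtain ⟨z, hz⟩ := exists_notMem_line hℓ
  obtain ⟨b, b0, b1, b2⟩ := exists_basis hℓ h hx hy hz
  obtain ⟨p, q, hpq⟩ := mem_of_mem_span hℓ h hx hy hw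
  rw [← b0, ← b1] at hpq
  have hp : p ≠ 0 := by
    rintro rfl
    apply hyw
    exact eq_of_rep_eq_smul (c := q) (by rw [hpq, zero_smul, zero_add, b1])
  have hq : q ≠ 0 := by
    rintro rfl
    apply hxw
    exact eq_of_rep_eq_smul (c := p) (by rw [hpq, zero_smul, add_zero, b0])
  have hcx : ∀ A ∈ H, ∃ c : ℂ, A.1 *ᵥ b 0 = c • b 0 := fun A hA =>
    b0.symm ▸ exists_eigenvalue (hfx A hA)
  have hcy : ∀ A ∈ H, ∃ c : ℂ, A.1 *ᵥ b 1 = c • b 1 := fun A hA =>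
    b1.symm ▸ exists_eigenvalue (hfy A hA)
  refine pointwise_line_case hΓ b hH (fun A hA => ?_) (fun A hA => ?_)
  · obtain ⟨c, hc⟩ := hcx A hA
    obtain ⟨d, hd⟩ := hcy A hA
    refine ⟨?_, ?_, ?_, ?_⟩ <;> rw [inBasis_apply] <;> simp [hc, hd]
  · obtain ⟨c, hc⟩ := hcx A hA
    obtain ⟨d, hd⟩ := hcy A hA
    obtain ⟨e, he⟩ := exists_eigenvalue (hfw A hA)
    rw [hpq, Matrix.mulVec_add, Matrix.mulVec_smul, Matrix.mulVec_smul, hc, hd] at he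
    have e0 := congrArg (fun v => b.repr v 0) he
    have e1 := congrArg (fun v => b.repr v 1) he
    simp at e0 e1
    rw [inBasis_apply, inBasis_apply, hc, hd]
    have hce : c = e := mul_left_cancel₀ hp (by linear_combination e0)
    have hde : d = e := mul_left_cancel₀ hq (by linear_combination e1)
    simp [hce, hde]

/-- The fixer of a point and of two lines avoiding it fixes every line through the common point of
the two lines. -/
lemma two_lines_case {Γ : Subgroup PSL3} (hΓ : DiscreteTopology ↥Γ) {H : Subgroup SL3}
    (hH : H ≤ liftSL Γ) {p q : Set P2} (hp : IsLine p) (hq : IsLine q) (hpq : p ≠ q) {v : P2}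
    (hvp : v ∉ p) (hvq : v ∉ q)
    (hfv : ∀ A ∈ H, pact (QuotientGroup.mk A : PSL3) v = v)
    (hfp : ∀ A ∈ H, pact (QuotientGroup.mk A : PSL3) '' p = p)
    (hfq : ∀ A ∈ H, pact (QuotientGroup.mk A : PSL3) '' q = q) :
    (linesIn (regSet H)ᶜ).encard ≤ 3 := by
  obtain ⟨x, hx⟩ := meet hp hq hpq
  have hxpq : x ∈ p ∩ q := by rw [hx]; rfl
  obtain ⟨y, hy, hyx⟩ := exists_other_point hp x
  have hyq : y ∉ q := fun h => hyx (by
    have : y ∈ p ∩ q := ⟨hy, h⟩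
    rw [hx] at this
    exact this)
  have hvx : v ≠ x := fun h => hvp (h ▸ hxpq.1)
  have hvy : v ≠ y := fun h => hvp (h ▸ hy)
  obtain ⟨m, hm, hvm, hxm⟩ := exists_line hvx
  have hym : y ∉ m := fun h => hvp (line_unique hm hp hyx h hxm hy hxpq.1 ▸ hvm)
  obtain ⟨b, b0, b1, b2⟩ := exists_basis hm hvx hvm hxm hym
  obtain ⟨k, hk, hvk, hyk⟩ := exists_line hvy
  obtain ⟨u, hu⟩ := meet hk hq (fun h => hyq (h ▸ hyk))
  have huk : u ∈ k ∩ q := by rw [hu]; rfl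
  obtain ⟨r, s, hrs⟩ := mem_of_mem_span hk hvy hvk hyk huk.1
  have hr : r ≠ 0 := by
    rintro rfl
    apply hyq
    have : y = u := eq_of_rep_eq_smul (c := s) (by rw [hrs, zero_smul, zero_add])
    exact this ▸ huk.2
  have hs : s ≠ 0 := by
    rintro rfl
    apply hvq
    have : v = u := eq_of_rep_eq_smul (c := r) (by rw [hrs, zero_smul, add_zero])
    exact this ▸ huk.2
  have hux : x ≠ u := by
    rintro rfl
    exact hym (line_unique hk hm hvx hvk huk.1 hvm hxm ▸ hyk)
  rw [← b0, ← b2] at hrs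
  have hcv : ∀ A ∈ H, ∃ c : ℂ, A.1 *ᵥ b 0 = c • b 0 := fun A hA =>
    b0.symm ▸ exists_eigenvalue (hfv A hA)
  have hcx : ∀ A ∈ H, ∃ c : ℂ, A.1 *ᵥ b 1 = c • b 1 := fun A hA => by
    rw [b1]
    apply exists_eigenvalue
    have h1 : pact (QuotientGroup.mk A : PSL3) x ∈ p ∩ q :=
      ⟨hfp A hA ▸ Set.mem_image_of_mem _ hxpq.1, hfq A hA ▸ Set.mem_image_of_mem _ hxpq.2⟩
    rw [hx] at h1
    exact h1
  have hcy : ∀ A ∈ H, ∃ c d : ℂ, A.1 *ᵥ b 2 = c • b 1 + d • b 2 := fun A hA => by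
    rw [b1, b2]
    exact mulVec_mem_line hp hyx.symm hxpq.1 hy hy (hfp A hA)
  refine pencil_case hΓ b hH (fun A hA => ?_) (fun A hA => ?_) (fun A hA => ?_)
  · obtain ⟨c, hc⟩ := hcv A hA
    obtain ⟨d, hd⟩ := hcx A hA
    refine ⟨?_, ?_, ?_, ?_⟩ <;> rw [inBasis_apply] <;> simp [hc, hd]
  · obtain ⟨c, d, hc⟩ := hcy A hA
    rw [inBasis_apply, hc]
    simp
  · obtain ⟨c, hc⟩ := hcv A hA
    obtain ⟨e, d, hd⟩ := hcy A hA
    obtain ⟨f, g, hfg⟩ := mulVec_mem_line hq hux hxpq.2 huk.2 huk.2 (hfq A hA)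
    rw [hrs, ← b1, Matrix.mulVec_add, Matrix.mulVec_smul, Matrix.mulVec_smul, hc, hd] at hfg
    have e0 := congrArg (fun v => b.repr v 0) hfg
    have e2 := congrArg (fun v => b.repr v 2) hfg
    simp at e0 e2
    rw [inBasis_apply, inBasis_apply, hc, hd]
    have e0' : c = g := mul_left_cancel₀ hr (by linear_combination e0)
    have e2' : d = g := mul_left_cancel₀ hs (by linear_combination e2)
    simp [e0', e2']

lemma exists_three {α : Type*} {s : Set α} (h : 2 < s.encard) :
    ∃ a b c, a ∈ s ∧ b ∈ s ∧ c ∈ s ∧ a ≠ b ∧ a ≠ c ∧ b ≠ c := by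
  have h3 : (3 : ℕ∞) ≤ s.encard := by
    have := Order.add_one_le_of_lt h
    rwa [two_add_one_eq_three] at this
  obtain ⟨t, hts, ht⟩ := Set.exists_subset_encard_eq h3
  obtain ⟨a, b, c, hab, hac, hbc, rfl⟩ := Set.encard_eq_three.1 ht
  exact ⟨a, b, c, hts (by simp), hts (by simp), hts (by simp), hab, hac, hbc⟩

/-! ### Double points of a maximal family in general position -/

/-- The points lying on two distinct lines of the family `L`. -/
def doublePts (L : Set (Set P2)) : Set P2 := ⋃ ℓ ∈ L, ⋃ m ∈ L \ {ℓ}, ℓ ∩ m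

lemma mem_doublePts {L : Set (Set P2)} {d : P2} :
    d ∈ doublePts L ↔ ∃ ℓ ∈ L, ∃ m ∈ L, ℓ ≠ m ∧ d ∈ ℓ ∧ d ∈ m := by
  simp only [doublePts, Set.mem_iUnion, Set.mem_inter_iff, Set.mem_sdiff, Set.mem_singleton_iff,
    exists_prop]
  constructor
  · rintro ⟨ℓ, hℓ, m, ⟨hm, hne⟩, h1, h2⟩
    exact ⟨ℓ, hℓ, m, hm, Ne.symm hne, h1, h2⟩
  · rintro ⟨ℓ, hℓ, m, hm, hne, h1, h2⟩
    exact ⟨ℓ, hℓ, m, ⟨hm, Ne.symm hne⟩, h1, h2⟩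

lemma finite_doublePts {L : Set (Set P2)} (hL : ∀ ℓ ∈ L, IsLine ℓ) (hf : L.Finite) :
    (doublePts L).Finite := by
  refine hf.biUnion fun ℓ hℓ => (hf.subset Set.sdiff_subset).biUnion fun m hm => ?_
  obtain ⟨p, hp⟩ := meet (hL ℓ hℓ) (hL m hm.1) (fun h => hm.2 h.symm)
  rw [hp]
  exact Set.finite_singleton p

/-- By maximality of `L`, each line in the complement of `Ω` passes through a double point. -/
lemma exists_doublePt {Ω : Set P2} (h4 : 4 ≤ LiG Ω) (hfin : LiG Ω ≠ ⊤) {L : Set (Set P2)}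
    (hL : L ∈ genFamilies Ω) (hcard : L.encard = LiG Ω) {s : Set P2} (hs : s ∈ linesIn Ωᶜ) :
    ∃ d ∈ doublePts L, d ∈ s := by
  have hLf : L.encard ≠ ⊤ := by rwa [hcard]
  by_cases hsL : s ∈ L
  · have h1 : 1 < L.encard := by
      rw [hcard]
      exact lt_of_lt_of_le (by norm_num) h4
    obtain ⟨m, hm, hne⟩ := Set.exists_ne_of_one_lt_encard h1 s
    obtain ⟨p, hp⟩ := meet hs.1 (hL.1 m hm).1 hne.symm
    have hps : p ∈ s ∩ m := by rw [hp]; rfl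
    exact ⟨p, mem_doublePts.2 ⟨s, hsL, m, hm, hne.symm, hps.1, hps.2⟩, hps.1⟩
  have hnot : ¬ InGenPos (insert s L) := by
    intro hgen
    have hmem : insert s L ∈ genFamilies Ω := by
      refine ⟨?_, hgen⟩
      rintro ℓ (rfl | hℓ)
      · exact hs
      · exact hL.1 ℓ hℓ
    have hle : (insert s L).encard ≤ LiG Ω := le_iSup₂_of_le _ hmem le_rfl
    rw [Set.encard_insert_of_notMem hsL, ← hcard] at hle
    exact absurd hle (not_le.2 ((ENat.lt_add_one_iff hLf).2 le_rfl))
  unfold InGenPos at hnot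
  push Not at hnot
  obtain ⟨p, ℓ₁, h1, ℓ₂, h2, ℓ₃, h3, p1, p2, p3, n12, n13, n23⟩ := hnot
  rcases h1 with rfl | h1
  · exact ⟨p, mem_doublePts.2 ⟨ℓ₂, h2.resolve_left n12.symm, ℓ₃, h3.resolve_left n13.symm,
      n23, p2, p3⟩, p1⟩
  rcases h2 with rfl | h2
  · exact ⟨p, mem_doublePts.2 ⟨ℓ₁, h1, ℓ₃, h3.resolve_left n23.symm, n13, p1, p3⟩, p2⟩
  rcases h3 with rfl | h3
  · exact ⟨p, mem_doublePts.2 ⟨ℓ₁, h1, ℓ₂, h2, n12, p1, p2⟩, p3⟩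
  rcases hL.2 p ℓ₁ h1 ℓ₂ h2 ℓ₃ h3 p1 p2 p3 with h | h | h
  exacts [absurd h n12, absurd h n13, absurd h n23]

/-! ### Points on infinitely many lines of the complement -/

/-- The points through which infinitely many lines of the complement of `Ω` pass. -/
def pencilPts (Ω : Set P2) : Set P2 := {v | {s ∈ linesIn Ωᶜ | v ∈ s}.Infinite}

lemma pencilPts_subset {Ω : Set P2} {D : Set P2} (hD : D.Finite)
    (hmeet : ∀ s ∈ linesIn Ωᶜ, ∃ d ∈ D, d ∈ s) : pencilPts Ω ⊆ D := by
  intro v hv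
  by_contra hvD
  choose! f hfD hfs using hmeet
  refine hv (Set.Finite.of_injOn (f := f) (t := D) (fun s hs => hfD s hs.1) ?_ hD)
  intro s hs t ht hst
  have hne : v ≠ f s := fun h => hvD (h ▸ hfD s hs.1)
  exact line_unique hs.1.1 ht.1.1 hne hs.2 (hfs s hs.1) ht.2 (hst ▸ hfs t ht.1)

lemma setOf_isVertex_eq {Ω : Set P2} {L : Set (Set P2)} (hL : ∀ ℓ ∈ L, IsLine ℓ)
    (hsub : pencilPts Ω ⊆ doublePts L) : {v | IsVertex Ω L v} = pencilPts Ω := by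
  ext v
  constructor
  · rintro ⟨ℓ₁, -, ℓ₂, -, -, C, hC, hC', hv⟩
    have hvC : v ∈ ℓ₁ ∩ ℓ₂ ∩ ⋂₀ C := by rw [hv]; rfl
    exact hC.mono fun s hs => ⟨hC' s hs, hvC.2 s hs⟩
  · intro hv
    obtain ⟨ℓ₁, h1, ℓ₂, h2, hne, hv1, hv2⟩ := mem_doublePts.1 (hsub hv)
    refine ⟨ℓ₁, h1, ℓ₂, h2, hne, _, hv, fun ℓ hℓ => hℓ.1, ?_⟩
    obtain ⟨p, hp⟩ := meet (hL ℓ₁ h1) (hL ℓ₂ h2) hne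
    have hvp : v ∈ ℓ₁ ∩ ℓ₂ := ⟨hv1, hv2⟩
    rw [hp] at hvp ⊢
    rw [Set.mem_singleton_iff.1 hvp]
    refine Set.inter_eq_left.2 ?_
    rintro _ rfl s hs
    exact hvp ▸ hs.2

lemma image_mem_linesIn {Γ : Subgroup PSL3} {Ω : Set P2}
    (hΩ : Ω = eqSet Γ ∨ Ω = kulkarniRegion Γ ∨ MaxDisc Γ Ω) {γ : PSL3} (hγ : γ ∈ Γ)
    {s : Set P2} (hs : s ∈ linesIn Ωᶜ) : pact γ '' s ∈ linesIn Ωᶜ := by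
  refine ⟨isLine_image hs.1 γ, ?_⟩
  rintro _ ⟨z, hz, rfl⟩
  exact compl_invariant hΩ hγ (hs.2 hz)

lemma pact_mem_pencilPts {Γ : Subgroup PSL3} {Ω : Set P2}
    (hΩ : Ω = eqSet Γ ∨ Ω = kulkarniRegion Γ ∨ MaxDisc Γ Ω) {γ : PSL3} (hγ : γ ∈ Γ)
    {v : P2} (hv : v ∈ pencilPts Ω) : pact γ v ∈ pencilPts Ω := by
  have h : {s ∈ linesIn Ωᶜ | v ∈ s}.Infinite := hv
  refine (h.image (f := fun s => pact γ '' s)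
    ((pact_injective γ).image_injective.injOn)).mono ?_
  rintro _ ⟨s, hs, rfl⟩
  exact ⟨image_mem_linesIn hΩ hγ hs.1, Set.mem_image_of_mem _ hs.2⟩

/-- Only finitely many lines of the complement of `Ω` avoid the points lying on infinitely many of
them. -/
lemma finite_avoiding {Ω : Set P2} {D : Set P2} (hD : D.Finite)
    (hmeet : ∀ s ∈ linesIn Ωᶜ, ∃ d ∈ D, d ∈ s) :
    {s ∈ linesIn Ωᶜ | ∀ v ∈ pencilPts Ω, v ∉ s}.Finite := by
  refine ((hD.subset Set.sdiff_subset).biUnion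
    (t := fun d => {s ∈ linesIn Ωᶜ | d ∈ s}) (s := D \ pencilPts Ω) fun d hd =>
      Set.not_infinite.1 hd.2).subset ?_
  rintro s ⟨hs, hav⟩
  obtain ⟨d, hd, hds⟩ := hmeet s hs
  exact Set.mem_biUnion (show d ∈ D \ pencilPts Ω from ⟨hd, fun h => hav d h hds⟩) ⟨hs, hds⟩

/-- The singular points of the fixer of a finite invariant family contain every line of the
complement of `Ω`, hence more than three lines. -/
lemma false_of_fixer {Γ : Subgroup PSL3} (hΓ : DiscreteTopology ↥Γ) {Ω : Set P2}
    (hΩ : Ω = eqSet Γ ∨ Ω = kulkarniRegion Γ ∨ MaxDisc Γ Ω) (h4 : 4 ≤ (linesIn Ωᶜ).encard)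
    {F : Set (Set P2)} (hF : F.Finite) (hinv : ∀ γ ∈ Γ, ∀ s ∈ F, pact γ '' s ∈ F)
    (h3 : (linesIn (regSet (fixer (liftSL Γ) F))ᶜ).encard ≤ 3) : False := by
  have hsub : linesIn Ωᶜ ⊆ linesIn (regSet (fixer (liftSL Γ) F))ᶜ := by
    rintro s ⟨hs, hs'⟩
    refine ⟨hs, hs'.trans (Set.compl_subset_compl.2 ?_)⟩
    exact (regSet_fixer_subset (liftSL Γ) hF fun A hA s hs => hinv _ hA s hs).trans
      (regSet_subset hΓ hΩ)
  have : (4 : ℕ∞) ≤ 3 := (h4.trans (Set.encard_le_encard hsub)).trans h3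
  exact absurd this (by norm_num)

lemma pact_eq_of_image_singleton {A : SL3} {x : P2}
    (h : pact (QuotientGroup.mk A : PSL3) '' {x} = {x}) : pact (QuotientGroup.mk A : PSL3) x = x := by
  rw [Set.image_singleton] at h
  exact Set.singleton_eq_singleton_iff.1 h

lemma pact_eq_of_inter {A : SL3} {ℓ m : Set P2} {x : P2} (hx : ℓ ∩ m = {x})
    (h1 : pact (QuotientGroup.mk A : PSL3) '' ℓ = ℓ)
    (h2 : pact (QuotientGroup.mk A : PSL3) '' m = m) : pact (QuotientGroup.mk A : PSL3) x = x := by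
  apply pact_eq_of_image_singleton
  rw [← hx, Set.image_inter (pact_injective _), h1, h2]

theorem exactly_two_vertices
    (Γ : Subgroup PSL3) (hΓ : DiscreteTopology ↥Γ) (Ω : Set P2)
    (hΩ : Ω = eqSet Γ ∨ Ω = kulkarniRegion Γ ∨ MaxDisc Γ Ω)
    (h4 : 4 ≤ LiG Ω) (hfin : LiG Ω ≠ ⊤)
    (L : Set (Set P2)) (hL : L ∈ genFamilies Ω) (hcard : L.encard = LiG Ω) :
    {v : P2 | IsVertex Ω L v}.encard = 2 := by
  have hLf : L.Finite := Set.encard_ne_top_iff.1 (by rwa [hcard])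
  have hD := finite_doublePts (fun ℓ hℓ => (hL.1 ℓ hℓ).1) hLf
  have hmeet : ∀ s ∈ linesIn Ωᶜ, ∃ d ∈ doublePts L, d ∈ s :=
    fun s hs => exists_doublePt h4 hfin hL hcard hs
  have hsub := pencilPts_subset hD hmeet
  have hVf : (pencilPts Ω).Finite := hD.subset hsub
  have hLS : L ⊆ linesIn Ωᶜ := fun ℓ hℓ => hL.1 ℓ hℓ
  have h4L : 4 ≤ L.encard := by rwa [hcard]
  have h4S : 4 ≤ (linesIn Ωᶜ).encard := h4L.trans (Set.encard_le_encard hLS)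
  have hav := finite_avoiding hD hmeet
  rw [setOf_isVertex_eq (fun ℓ hℓ => (hL.1 ℓ hℓ).1) hsub]
  by_contra hne
  rcases lt_or_gt_of_ne hne with hlt | hgt
  · rcases Set.encard_le_one_iff_eq.1 (Order.le_of_lt_add_one (y := (1 : ℕ∞))
      (by rwa [one_add_one_eq_two])) with h0 | ⟨v, hv⟩
    · -- Without a vertex there are finitely many lines; the sides of a triangle are fixed.
      have hSf : (linesIn Ωᶜ).Finite := by
        refine hav.subset fun s hs => ⟨hs, ?_⟩
        rw [h0]
        simp
      refine false_of_fixer hΓ hΩ h4S hSf (fun γ hγ s hs => image_mem_linesIn hΩ hγ hs) ?_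
      obtain ⟨ℓ₁, ℓ₂, ℓ₃, h1, h2, h3, n12, n13, n23⟩ := exists_three
        (lt_of_lt_of_le (by norm_num) h4L)
      obtain ⟨x, hx⟩ := meet (hLS h1).1 (hLS h2).1 n12
      obtain ⟨y, hy⟩ := meet (hLS h1).1 (hLS h3).1 n13
      obtain ⟨z, hz⟩ := meet (hLS h2).1 (hLS h3).1 n23
      have hx' : x ∈ ℓ₁ ∩ ℓ₂ := by rw [hx]; rfl
      have hy' : y ∈ ℓ₁ ∩ ℓ₃ := by rw [hy]; rfl
      have hz' : z ∈ ℓ₂ ∩ ℓ₃ := by rw [hz]; rfl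
      have hgen : ∀ p, p ∈ ℓ₁ → p ∈ ℓ₂ → p ∉ ℓ₃ := by
        intro p p1 p2 p3
        rcases hL.2 p ℓ₁ h1 ℓ₂ h2 ℓ₃ h3 p1 p2 p3 with h | h | h
        exacts [n12 h, n13 h, n23 h]
      refine three_points_case (hLS h1).1 (x := x) (y := y) (z := z) ?_ hx'.1 hy'.1
        (fun h => hgen z h hz'.1 hz'.2)
        (fun A hA => pact_eq_of_inter hx (hA.2 _ (hLS h1)) (hA.2 _ (hLS h2)))
        (fun A hA => pact_eq_of_inter hy (hA.2 _ (hLS h1)) (hA.2 _ (hLS h3)))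
        (fun A hA => pact_eq_of_inter hz (hA.2 _ (hLS h2)) (hA.2 _ (hLS h3)))
      rintro rfl
      exact hgen x hx'.1 hx'.2 hy'.2
    · -- With one vertex, it and the finitely many lines avoiding it are permuted.
      have hfixv : ∀ γ ∈ Γ, pact γ v = v := by
        intro γ hγ
        have := pact_mem_pencilPts hΩ hγ (v := v) (by rw [hv]; rfl)
        rw [hv] at this
        exact this
      have hFf : (insert {v} {s ∈ linesIn Ωᶜ | v ∉ s} : Set (Set P2)).Finite := by
        refine Set.Finite.insert _ (hav.subset fun s hs => ⟨hs.1, ?_⟩)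
        rw [hv]
        rintro _ rfl
        exact hs.2
      refine false_of_fixer hΓ hΩ h4S hFf ?_ ?_
      · rintro γ hγ s (rfl | hs)
        · left
          rw [Set.image_singleton, hfixv γ hγ]
        · right
          refine ⟨image_mem_linesIn hΩ hγ hs.1, ?_⟩
          rintro ⟨z, hz, hzv⟩
          rw [← hfixv γ hγ] at hzv
          exact hs.2 (pact_injective γ hzv ▸ hz)
      · have hcardv : 1 < {ℓ ∈ L | v ∉ ℓ}.encard := by
          by_contra hle
          rw [not_lt] at hle
          have hthrough : {ℓ ∈ L | v ∈ ℓ}.encard ≤ 2 := by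
            by_contra hlt
            rw [not_le] at hlt
            obtain ⟨ℓ₁, ℓ₂, ℓ₃, h1, h2, h3, n12, n13, n23⟩ := exists_three hlt
            rcases hL.2 v ℓ₁ h1.1 ℓ₂ h2.1 ℓ₃ h3.1 h1.2 h2.2 h3.2 with h | h | h
            exacts [n12 h, n13 h, n23 h]
          have hLu : L ⊆ {ℓ ∈ L | v ∈ ℓ} ∪ {ℓ ∈ L | v ∉ ℓ} := by
            intro ℓ hℓ
            by_cases h : v ∈ ℓ
            exacts [Or.inl ⟨hℓ, h⟩, Or.inr ⟨hℓ, h⟩]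
          have : (4 : ℕ∞) ≤ 2 + 1 := h4L.trans ((Set.encard_le_encard hLu).trans
            ((Set.encard_union_le _ _).trans (add_le_add hthrough hle)))
          exact absurd this (by norm_num)
        obtain ⟨p, q, hp, hq, hpq⟩ := Set.one_lt_encard_iff.1 hcardv
        exact two_lines_case hΓ (fixer_le _ _) (hLS hp.1).1 (hLS hq.1).1 hpq hp.2 hq.2
          (fun A hA => hfixv _ hA.1)
          (fun A hA => hA.2 p (Or.inr ⟨hLS hp.1, hp.2⟩))
          (fun A hA => hA.2 q (Or.inr ⟨hLS hq.1, hq.2⟩))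
  · -- With three or more vertices, finitely many in any case, these are permuted.
    refine false_of_fixer hΓ hΩ h4S (hVf.image fun v => ({v} : Set P2)) ?_ ?_
    · rintro γ hγ _ ⟨v, hv, rfl⟩
      exact ⟨pact γ v, pact_mem_pencilPts hΩ hγ hv, Set.image_singleton.symm⟩
    · obtain ⟨x, y, z, hx, hy, hz, nxy, nxz, nyz⟩ := exists_three hgt
      obtain ⟨ℓ, hℓ, hxℓ, hyℓ⟩ := exists_line nxy
      have hfix : ∀ w ∈ pencilPts Ω,
          ∀ A ∈ fixer (liftSL Γ) ((fun v => ({v} : Set P2)) '' pencilPts Ω),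
          pact (QuotientGroup.mk A : PSL3) w = w :=
        fun w hw A hA => pact_eq_of_image_singleton (hA.2 _ ⟨w, hw, rfl⟩)
      by_cases hzℓ : z ∈ ℓ
      · exact collinear_case hΓ (fixer_le _ _) hℓ nxy nxz nyz hxℓ hyℓ hzℓ (hfix x hx) (hfix y hy)
          (hfix z hz)
      · exact three_points_case hℓ nxy hxℓ hyℓ hzℓ (hfix x hx) (hfix y hy) (hfix z hz)
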